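/- (Shafrir's sup + inf inequality, with the Chen–Lin constant.) Let Ω ⊂ ℝ² be an open set, 0 < a ≤ b < +∞, and K ⊂ Ω a compact set. Then there exists a constant c = c(a, b, K, Ω) such that for every function V : Ω → ℝ with a ≤ V(x) ≤ b for all x ∈ Ω, and every C² function u on Ω satisfying −Δu = V e^u in Ω, one has √(a/b) · sup_K u + inf_Ω u ≤ c. -/

import Mathlib

open MeasureTheory Filter Metric

abbrev E2 := EuclideanSpace ℝ (Fin 2)

noncomputable def pd (j : Fin 2) (u : E2 → ℝ) (x : E2) : ℝ :=
  fderiv ℝ u x (EuclideanSpace.single j 1)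

noncomputable def lapl (u : E2 → ℝ) (x : E2) : ℝ :=
  pd 0 (pd 0 u) x + pd 1 (pd 1 u) x


noncomputable def dX (f : ℂ → ℝ) (z : ℂ) : ℝ := fderiv ℝ f z 1
noncomputable def dY (f : ℂ → ℝ) (z : ℂ) : ℝ := fderiv ℝ f z Complex.I
noncomputable def lapC (f : ℂ → ℝ) (z : ℂ) : ℝ := dX (dX f) z + dY (dY f) z

lemma contDiff_dX {f : ℂ → ℝ} {n : ℕ} (hf : ContDiff ℝ (n + 1) f) : ContDiff ℝ n (dX f) :=
  (hf.fderiv_right le_rfl).clm_apply contDiff_const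

lemma contDiff_dY {f : ℂ → ℝ} {n : ℕ} (hf : ContDiff ℝ (n + 1) f) : ContDiff ℝ n (dY f) :=
  (hf.fderiv_right le_rfl).clm_apply contDiff_const

lemma contDiff_dX1 {f : ℂ → ℝ} (hf : ContDiff ℝ 2 f) : ContDiff ℝ 1 (dX f) := by
  have := contDiff_dX (n := 1) (f := f) (by simpa [one_add_one_eq_two] using hf)
  simpa using this

lemma contDiff_dY1 {f : ℂ → ℝ} (hf : ContDiff ℝ 2 f) : ContDiff ℝ 1 (dY f) := by
  have := contDiff_dY (n := 1) (f := f) (by simpa [one_add_one_eq_two] using hf)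
  simpa using this

lemma cont_dX {f : ℂ → ℝ} (hf : ContDiff ℝ 1 f) : Continuous (dX f) :=
  (hf.continuous_fderiv one_ne_zero).clm_apply continuous_const

lemma cont_dY {f : ℂ → ℝ} (hf : ContDiff ℝ 1 f) : Continuous (dY f) :=
  (hf.continuous_fderiv one_ne_zero).clm_apply continuous_const

lemma cont_lap {f : ℂ → ℝ} (hf : ContDiff ℝ 2 f) : Continuous (lapC f) :=
  (cont_dX (contDiff_dX1 hf)).add (cont_dY (contDiff_dY1 hf))

lemma int_fderiv_zero (Y : ℂ → ℝ) (hY : ContDiff ℝ 1 Y) (hc : HasCompactSupport Y) (v : ℂ) :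
    ∫ z, fderiv ℝ Y z v = 0 := by
  have hcd : HasCompactSupport (fun z => fderiv ℝ Y z v) := hc.fderiv_apply ℝ v
  have hcont : Continuous (fun z => fderiv ℝ Y z v) :=
    (hY.continuous_fderiv one_ne_zero).clm_apply continuous_const
  have := integral_mul_fderiv_eq_neg_fderiv_mul_of_integrable (μ := (volume : Measure ℂ))
    (f := fun _ => (1 : ℝ)) (g := Y) (v := v) (by simp)
    (by simpa using hcont.integrable_of_hasCompactSupport hcd)
    (by simpa using hY.continuous.integrable_of_hasCompactSupport hc)
    (by fun_prop) (fun x _ => (hY.differentiable one_ne_zero) x)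
  simpa using this

lemma dX_mul {f g : ℂ → ℝ} {z : ℂ} (hf : DifferentiableAt ℝ f z) (hg : DifferentiableAt ℝ g z) :
    dX (fun z => f z * g z) z = dX f z * g z + f z * dX g z := by
  simp only [dX]
  rw [fderiv_fun_mul hf hg]
  simp; ring

lemma dY_mul {f g : ℂ → ℝ} {z : ℂ} (hf : DifferentiableAt ℝ f z) (hg : DifferentiableAt ℝ g z) :
    dY (fun z => f z * g z) z = dY f z * g z + f z * dY g z := by
  simp only [dY]
  rw [fderiv_fun_mul hf hg]
  simp; ring

/-- Green identity. -/
lemma green (φ W : ℂ → ℝ) (hφ : ContDiff ℝ 1 φ) (hc : HasCompactSupport φ) (hW : ContDiff ℝ 2 W) :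
    ∫ z, (dX φ z * dX W z + dY φ z * dY W z) = ∫ z, φ z * (-(lapC W z)) := by
  have hWx := contDiff_dX1 hW
  have hWy := contDiff_dY1 hW
  have h1 := int_fderiv_zero (fun z => φ z * dX W z) (hφ.mul hWx) hc.mul_right 1
  have h2 := int_fderiv_zero (fun z => φ z * dY W z) (hφ.mul hWy) hc.mul_right Complex.I
  have e1 : ∀ z, fderiv ℝ (fun z => φ z * dX W z) z 1 = dX φ z * dX W z + φ z * dX (dX W) z :=
    fun z => dX_mul (hφ.differentiable one_ne_zero z) (hWx.differentiable one_ne_zero z)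
  have e2 : ∀ z, fderiv ℝ (fun z => φ z * dY W z) z Complex.I
      = dY φ z * dY W z + φ z * dY (dY W) z :=
    fun z => dY_mul (hφ.differentiable one_ne_zero z) (hWy.differentiable one_ne_zero z)
  simp only [e1, e2] at h1 h2
  have hcx : HasCompactSupport (dX φ) := hc.fderiv_apply ℝ 1
  have hcy : HasCompactSupport (dY φ) := hc.fderiv_apply ℝ Complex.I
  have i1 : Integrable (fun z => dX φ z * dX W z) :=
    ((cont_dX hφ).mul hWx.continuous).integrable_of_hasCompactSupport hcx.mul_right
  have i2 : Integrable (fun z => φ z * dX (dX W) z) :=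
    (hφ.continuous.mul (cont_dX hWx)).integrable_of_hasCompactSupport hc.mul_right
  have i3 : Integrable (fun z => dY φ z * dY W z) :=
    ((cont_dY hφ).mul hWy.continuous).integrable_of_hasCompactSupport hcy.mul_right
  have i4 : Integrable (fun z => φ z * dY (dY W) z) :=
    (hφ.continuous.mul (cont_dY hWy)).integrable_of_hasCompactSupport hc.mul_right
  rw [integral_add i1 i2] at h1
  rw [integral_add i3 i4] at h2
  rw [integral_add i1 i3]
  have : ∫ z, φ z * (-(lapC W z)) = -(∫ z, φ z * dX (dX W) z) - ∫ z, φ z * dY (dY W) z := by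
    have h3 := integral_sub i2.neg i4
    simp only [Pi.neg_apply] at h3
    rw [← integral_neg, ← h3]
    congr 1; ext z; simp [lapC]; ring
  rw [this]; linarith


/-- Inverse of `x ↦ x + sin x cos x`. -/
lemma exists_beta_inv : ∃ A : ℝ → ℝ, ∀ y, -(Real.pi/2) < y → y < Real.pi/2 →
    ContDiffAt ℝ 1 A y ∧ 0 < Real.cos (A y) ∧ HasDerivAt A (1 / (2 * Real.cos (A y) ^ 2)) y := by
  set β : ℝ → ℝ := fun x => x + Real.sin x * Real.cos x with hβ
  have hmono : StrictMono β := by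
    intro x y hxy
    have hd : 0 < y - x := by linarith
    have h1 : Real.sin (y - x) < y - x := Real.sin_lt hd
    have h2 : -(y - x) < Real.sin (y - x) := by
      have := Real.sin_lt hd
      have := Real.neg_one_le_sin (y - x)
      by_cases h8 : y - x ≤ Real.pi
      · linarith [Real.sin_nonneg_of_nonneg_of_le_pi hd.le h8]
      · linarith [Real.pi_gt_three]
    have h3 : Real.sin y * Real.cos y - Real.sin x * Real.cos x
        = Real.cos (x + y) * Real.sin (y - x) := by
      rw [Real.cos_add, Real.sin_sub]
      have := Real.sin_sq_add_cos_sq x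
      have := Real.sin_sq_add_cos_sq y
      have e1 : Real.sin x ^ 2 = 1 - Real.cos x ^ 2 := by linarith
      have e2 : Real.sin y ^ 2 = 1 - Real.cos y ^ 2 := by linarith
      ring_nf
      rw [e1, e2]; ring
    have h4 : |Real.cos (x + y) * Real.sin (y - x)| ≤ |Real.sin (y - x)| := by
      rw [abs_mul]
      exact mul_le_of_le_one_left (abs_nonneg _) (Real.abs_cos_le_one _)
    have h5 : |Real.sin (y - x)| < y - x := abs_lt.2 ⟨h2, h1⟩
    have h6 := neg_abs_le (Real.cos (x + y) * Real.sin (y - x))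
    simp only [hβ]
    linarith
  have hcont : Continuous β := by fun_prop
  have hbd : ∀ x, |β x - x| ≤ 1 := by
    intro x
    simp only [hβ, add_sub_cancel_left, abs_mul]
    exact mul_le_one₀ (Real.abs_sin_le_one _) (abs_nonneg _) (Real.abs_cos_le_one _)
  have hsurj : Function.Surjective β := by
    apply hcont.surjective
    · apply tendsto_atTop_mono (f := fun x => x - 1)
      · intro x; have := abs_le.1 (hbd x); linarith
      · exact tendsto_atTop_add_const_right _ _ tendsto_id
    · apply tendsto_atBot_mono (f := fun x => x + 1)
      · intro x; have := abs_le.1 (hbd x); linarith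
      · exact tendsto_atBot_add_const_right _ _ tendsto_id
  let e := (hmono.orderIsoOfSurjective β hsurj).toHomeomorph
  have hee : ∀ x, e x = β x := fun x => rfl
  have hder : ∀ x, HasDerivAt β (2 * Real.cos x ^ 2) x := by
    intro x
    have := (hasDerivAt_id x).add ((Real.hasDerivAt_sin x).mul (Real.hasDerivAt_cos x))
    refine HasDerivAt.congr_deriv (f := β) this ?_
    linear_combination (-1 : ℝ) * Real.sin_sq_add_cos_sq x
  refine ⟨e.symm, fun y hy1 hy2 => ?_⟩
  have hy : β (e.symm y) = y := e.apply_symm_apply y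
  have hcos : 0 < Real.cos (e.symm y) := by
    apply Real.cos_pos_of_mem_Ioo
    constructor
    · rw [← hmono.lt_iff_lt, hy]; simp only [hβ]; simpa using hy1
    · rw [← hmono.lt_iff_lt, hy]; simp only [hβ]; simpa using hy2
  refine ⟨?_, hcos, ?_⟩
  · have := e.toOpenPartialHomeomorph.contDiffAt_symm_deriv (n := 1) (a := y)
      (f₀' := 2 * Real.cos (e.symm y) ^ 2) (by positivity) (by simp) (hder _)
      (by
        have : ContDiff ℝ 1 β := by
          simp only [hβ]
          exact contDiff_id.add (Real.contDiff_sin.mul Real.contDiff_cos)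
        exact this.contDiffAt)
    exact this
  · rw [one_div]
    exact HasDerivAt.of_local_left_inverse (f := β) (e.symm.continuous.continuousAt) (hder _)
      (by positivity) (Eventually.of_forall fun z => e.apply_symm_apply z)

noncomputable def ck (t : ℝ) : ℝ := (1 / Real.pi) * (1 + t ^ 2)⁻¹
noncomputable def cK (t : ℝ) : ℝ := 1 / 2 + (1 / Real.pi) * Real.arctan t

lemma ck_pos (t : ℝ) : 0 < ck t := by unfold ck; positivity
lemma ck_le (t : ℝ) : ck t ≤ 1 := by
  unfold ck
  have h1 : 1 / Real.pi ≤ 1 := by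
    rw [div_le_one Real.pi_pos]; linarith [Real.pi_gt_three]
  have h2 : (1 + t ^ 2)⁻¹ ≤ 1 := inv_le_one_of_one_le₀ (by nlinarith [sq_nonneg t])
  exact mul_le_one₀ h1 (by positivity) h2
lemma cK_pos (t : ℝ) : 0 < cK t := by
  unfold cK
  have := Real.neg_pi_div_two_lt_arctan t
  have hp := Real.pi_pos
  have : 0 < (1 / Real.pi) * (Real.pi / 2 + Real.arctan t) := by
    apply mul_pos (by positivity); linarith
  have e : (1 / Real.pi) * (Real.pi / 2 + Real.arctan t) = 1/2 + (1/Real.pi) * Real.arctan t := by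
    field_simp
  linarith
lemma cK_lt (t : ℝ) : cK t < 1 := by
  unfold cK
  have := Real.arctan_lt_pi_div_two t
  have hp := Real.pi_pos
  have : 0 < (1 / Real.pi) * (Real.pi / 2 - Real.arctan t) := by
    apply mul_pos (by positivity); linarith
  have e : (1 / Real.pi) * (Real.pi / 2 - Real.arctan t) = 1/2 - (1/Real.pi) * Real.arctan t := by
    field_simp
  linarith
lemma cK_deriv (t : ℝ) : HasDerivAt cK (ck t) t := by
  have := ((Real.hasDerivAt_arctan t).const_mul (1 / Real.pi)).const_add (1/2)
  simp only [one_div] at this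
  unfold cK ck
  simpa only [one_div] using this
lemma ck_contDiff : ContDiff ℝ 1 ck := by
  unfold ck
  refine contDiff_const.mul (ContDiff.inv (by fun_prop) (fun t => by positivity))
lemma cK_contDiff : ContDiff ℝ 1 cK := by
  unfold cK
  exact contDiff_const.add (contDiff_const.mul (Real.contDiff_arctan))
lemma ck_deriv_bd (t : ℝ) : |deriv ck t| ≤ 1 := by
  have h : HasDerivAt ck ((1 / Real.pi) * (-(2 * t) / (1 + t ^ 2) ^ 2)) t := by
    have h1 : HasDerivAt (fun t : ℝ => 1 + t ^ 2) (2 * t) t := by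
      simpa using (hasDerivAt_pow 2 t).const_add 1
    exact (h1.inv (by positivity)).const_mul _
  rw [h.deriv, abs_mul, abs_of_pos (by positivity : 0 < 1 / Real.pi), abs_div, abs_neg,
    abs_of_pos (by positivity : 0 < (1 + t^2)^2)]
  have h1 : 1 / Real.pi ≤ 1 := by
    rw [div_le_one Real.pi_pos]; linarith [Real.pi_gt_three]
  refine mul_le_one₀ h1 (by positivity) ?_
  rw [div_le_one (by positivity), abs_le]
  constructor <;> nlinarith [sq_nonneg (t-1), sq_nonneg (t+1), sq_nonneg (t^2)]

/-- Convolution of a finite measure with a `C¹` function with bounded derivative. -/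
lemma conv_contDiff {H : Type*} [NormedAddCommGroup H] [NormedSpace ℝ H]
    (ν : Measure ℂ) [IsFiniteMeasure ν] (l : ℂ → H) (hl : Continuous l)
    (Θ : H → ℝ) (hΘ : ContDiff ℝ 1 Θ) (hb : ∀ x, |Θ x| ≤ 1) (hb' : ∀ x, ‖fderiv ℝ Θ x‖ ≤ 2) :
    ContDiff ℝ 1 (fun x => ∫ ζ, Θ (x - l ζ) ∂ν) ∧
    ∀ x v, fderiv ℝ (fun x => ∫ ζ, Θ (x - l ζ) ∂ν) x v = ∫ ζ, fderiv ℝ Θ (x - l ζ) v ∂ν := by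
  have hc1 : ∀ x, Continuous fun ζ => Θ (x - l ζ) := fun x =>
    hΘ.continuous.comp (continuous_const.sub hl)
  have hcf := hΘ.continuous_fderiv one_ne_zero
  have hc2 : ∀ x, Continuous fun ζ => fderiv ℝ Θ (x - l ζ) := fun x =>
    hcf.comp (continuous_const.sub hl)
  have hi2 : ∀ x, Integrable (fun ζ => fderiv ℝ Θ (x - l ζ)) ν := fun x =>
    Integrable.of_bound (hc2 x).aestronglyMeasurable 2 (Eventually.of_forall fun ζ => hb' _)
  have key : ∀ x, HasFDerivAt (fun x => ∫ ζ, Θ (x - l ζ) ∂ν)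
      (∫ ζ, fderiv ℝ Θ (x - l ζ) ∂ν) x := by
    intro x
    apply hasFDerivAt_integral_of_dominated_of_fderiv_le (bound := fun _ => 2) (s := Set.univ)
      (F := fun x ζ => Θ (x - l ζ)) (F' := fun x ζ => fderiv ℝ Θ (x - l ζ))
    · exact univ_mem
    · exact Eventually.of_forall fun x => (hc1 x).aestronglyMeasurable
    · exact Integrable.of_bound (hc1 x).aestronglyMeasurable 1 (Eventually.of_forall fun ζ => hb _)
    · exact (hc2 x).aestronglyMeasurable
    · exact Eventually.of_forall fun ζ x _ => hb' _
    · exact integrable_const _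
    · refine Eventually.of_forall fun ζ x _ => ?_
      have h1 := (hΘ.differentiable one_ne_zero (x - l ζ)).hasFDerivAt
      have h2 : HasFDerivAt (fun x : H => x - l ζ) (ContinuousLinearMap.id ℝ H) x :=
        (hasFDerivAt_id x).sub_const _
      exact h1.comp x h2
  have hfd : fderiv ℝ (fun x => ∫ ζ, Θ (x - l ζ) ∂ν) = fun x => ∫ ζ, fderiv ℝ Θ (x - l ζ) ∂ν :=
    funext fun x => (key x).fderiv
  constructor
  · rw [contDiff_one_iff_fderiv]
    refine ⟨fun x => (key x).differentiableAt, ?_⟩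
    rw [hfd]
    apply continuous_of_dominated (bound := fun _ => 2)
    · exact fun x => (hc2 x).aestronglyMeasurable
    · exact fun x => Eventually.of_forall fun ζ => hb' _
    · exact integrable_const _
    · exact Eventually.of_forall fun ζ => hcf.comp (continuous_id.sub continuous_const)
  · intro x v
    rw [hfd]
    exact ContinuousLinearMap.integral_apply (hi2 x) v


lemma knothe (ν : Measure ℂ) [IsFiniteMeasure ν] (hν : 0 < ν.real Set.univ) :
    ∃ T1 : ℝ → ℝ, ∃ T2 : ℂ → ℝ, ContDiff ℝ 1 T1 ∧ ContDiff ℝ 1 T2 ∧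
      (∀ z : ℂ, T1 z.re ^ 2 + T2 z ^ 2 ≤ 1) ∧
      ∀ z : ℂ, 0 ≤ deriv T1 z.re ∧ 0 ≤ dY T2 z ∧
        deriv T1 z.re * dY T2 z
          = Real.pi / ν.real Set.univ * ∫ ζ, ck (z.re - ζ.re) * ck (z.im - ζ.im) ∂ν := by
  obtain ⟨A, hA⟩ := exists_beta_inv
  set m := ν.real Set.univ with hm
  have hpi := Real.pi_pos
  have hck : Continuous ck := ck_contDiff.continuous
  have hcK : Continuous cK := cK_contDiff.continuous
  -- the marginal
  set N : ℝ → ℝ := fun x => ∫ ζ, cK (x - Complex.re ζ) ∂ν with hN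
  set n : ℝ → ℝ := fun x => ∫ ζ, ck (x - Complex.re ζ) ∂ν with hn
  have hNc := conv_contDiff ν Complex.re Complex.continuous_re cK cK_contDiff
    (fun x => abs_le.2 ⟨by linarith [cK_pos x], (cK_lt x).le⟩)
    (fun x => by
      rw [(cK_deriv x).hasFDerivAt.fderiv]
      simp only [ContinuousLinearMap.norm_toSpanSingleton, Real.norm_eq_abs]
      rw [abs_of_pos (ck_pos x)]; linarith [ck_le x])
  have hnc := (conv_contDiff ν Complex.re Complex.continuous_re ck ck_contDiff
    (fun x => abs_le.2 ⟨by linarith [ck_pos x], (ck_le x)⟩)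
    (fun x => by
      rw [← norm_deriv_eq_norm_fderiv, Real.norm_eq_abs]; linarith [ck_deriv_bd x])).1
  have hNd : ∀ x, HasDerivAt N (n x) x := by
    intro x
    have h1 : deriv N x = n x := by
      rw [← fderiv_apply_one_eq_deriv]
      have := hNc.2 x 1
      simp only [hN, hn]
      rw [this]
      congr 1; ext ζ
      rw [fderiv_apply_one_eq_deriv, (cK_deriv _).deriv]
    rw [← h1]
    exact (hNc.1.differentiable one_ne_zero x).hasDerivAt
  have ν0 : NeZero ν := ⟨by rintro h; rw [hm, h] at hν; simp at hν⟩
  have pos_int : ∀ F : ℂ → ℝ, Continuous F → (∀ ζ, 0 < F ζ) → (∀ ζ, F ζ ≤ 1) →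
      Integrable F ν ∧ 0 < ∫ ζ, F ζ ∂ν := by
    intro F hF h0 h1
    have hi : Integrable F ν := Integrable.of_bound hF.aestronglyMeasurable 1
      (Eventually.of_forall fun ζ => by rw [Real.norm_eq_abs, abs_of_pos (h0 ζ)]; exact h1 ζ)
    refine ⟨hi, ?_⟩
    rw [integral_pos_iff_support_of_nonneg (fun ζ => (h0 ζ).le) hi]
    have : Function.support F = Set.univ := by
      ext ζ; simp [(h0 ζ).ne']
    rw [this]
    exact Measure.measure_univ_pos.2 ν0.1
  have hn0 : ∀ x, 0 < n x := fun x => (pos_int _ (by fun_prop) (fun ζ => ck_pos _)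
    (fun ζ => ck_le _)).2
  have hN0 : ∀ x, 0 < N x := fun x => (pos_int _ (by fun_prop) (fun ζ => cK_pos _)
    (fun ζ => (cK_lt _).le)).2
  have hN1 : ∀ x, N x < m := by
    intro x
    have h1 := (pos_int (fun ζ => 1 - cK (x - ζ.re)) (by fun_prop)
      (fun ζ => by linarith [cK_lt (x - ζ.re)]) (fun ζ => by linarith [cK_pos (x - ζ.re)])).2
    rw [integral_sub (integrable_const _)
      (pos_int _ (by fun_prop) (fun ζ => cK_pos _) (fun ζ => (cK_lt _).le)).1] at h1
    simp only [integral_const, smul_eq_mul, mul_one] at h1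
    simp only [hN]; linarith
  -- the conditional distribution
  set Θ : ℂ → ℝ := fun z => ck z.re * cK z.im with hΘ
  set Q : ℂ → ℝ := fun z => ∫ ζ, Θ (z - ζ) ∂ν with hQ
  have hΘc : ContDiff ℝ 1 Θ :=
    (ck_contDiff.comp Complex.reCLM.contDiff).mul (cK_contDiff.comp Complex.imCLM.contDiff)
  have hΘd : ∀ z, HasFDerivAt Θ (ck z.re • (ck z.im • Complex.imCLM)
      + cK z.im • (deriv ck z.re • Complex.reCLM)) z := by
    intro z
    have h1 : HasFDerivAt (fun z : ℂ => ck z.re) (deriv ck z.re • Complex.reCLM) z := by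
      have := ((ck_contDiff.differentiable one_ne_zero z.re).hasDerivAt).comp_hasFDerivAt z
        (Complex.reCLM.hasFDerivAt (x := z))
      exact this
    have h2 : HasFDerivAt (fun z : ℂ => cK z.im) (ck z.im • Complex.imCLM) z := by
      have := (cK_deriv z.im).comp_hasFDerivAt z (Complex.imCLM.hasFDerivAt (x := z))
      exact this
    exact h1.mul h2
  have hQc := conv_contDiff ν id continuous_id Θ hΘc
    (fun z => by
      rw [abs_of_pos (mul_pos (ck_pos _) (cK_pos _))]
      exact mul_le_one₀ (ck_le _) (cK_pos _).le (cK_lt _).le)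
    (fun z => by
      rw [(hΘd z).fderiv]
      refine (norm_add_le _ _).trans ?_
      simp only [norm_smul, Complex.reCLM_norm, Complex.imCLM_norm, mul_one, Real.norm_eq_abs,
        abs_of_pos (ck_pos _), abs_of_pos (cK_pos _)]
      have h1 := mul_le_one₀ (ck_le z.re) (ck_pos z.im).le (ck_le z.im)
      have h2 := mul_le_one₀ (cK_lt z.im).le (abs_nonneg (deriv ck z.re)) (ck_deriv_bd _)
      linarith)
  simp only [id] at hQc
  have hQy : ∀ z : ℂ, dY Q z = ∫ ζ, ck (z.re - ζ.re) * ck (z.im - ζ.im) ∂ν := by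
    intro z
    simp only [dY, hQ]
    rw [hQc.2 z Complex.I]
    congr 1; ext ζ
    rw [(hΘd _).fderiv]; simp
  have hΘ01 : ∀ z, 0 < Θ z := fun z => mul_pos (ck_pos _) (cK_pos _)
  have hQ0 : ∀ z, 0 < Q z := fun z => (pos_int _ (by fun_prop) (fun ζ => hΘ01 _)
    (fun ζ => mul_le_one₀ (ck_le _) (cK_pos _).le (cK_lt _).le)).2
  have hQ1 : ∀ z, Q z ≤ n z.re := by
    intro z
    apply integral_mono
    · exact (pos_int _ (by fun_prop) (fun ζ => hΘ01 _)
        (fun ζ => mul_le_one₀ (ck_le _) (cK_pos _).le (cK_lt _).le)).1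
    · exact (pos_int _ (by fun_prop) (fun ζ => ck_pos _) (fun ζ => ck_le _)).1
    · intro ζ
      simp only [hΘ, Complex.sub_re, Complex.sub_im]
      exact mul_le_of_le_one_right (ck_pos _).le (cK_lt _).le
  -- the angle
  set y : ℝ → ℝ := fun x => Real.pi / m * N x - Real.pi / 2 with hy
  have hyc : ContDiff ℝ 1 y := (contDiff_const.mul hNc.1).sub contDiff_const
  have hyd : ∀ x, HasDerivAt y (Real.pi / m * n x) x := fun x =>
    ((hNd x).const_mul _).sub_const _
  have hy1 : ∀ x, -(Real.pi/2) < y x := by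
    intro x
    have : 0 < Real.pi / m * N x := mul_pos (by positivity) (hN0 x)
    simp only [hy]; linarith
  have hy2 : ∀ x, y x < Real.pi/2 := by
    intro x
    have : Real.pi / m * N x < Real.pi / m * m := by
      apply mul_lt_mul_of_pos_left (hN1 x) (by positivity)
    rw [div_mul_cancel₀ _ hν.ne'] at this
    simp only [hy]; linarith
  set B : ℝ → ℝ := fun x => A (y x) with hB
  have hBc : ContDiff ℝ 1 B := contDiff_iff_contDiffAt.2 fun x =>
    ((hA _ (hy1 x) (hy2 x)).1).comp x hyc.contDiffAt
  have hcos : ∀ x, 0 < Real.cos (B x) := fun x => (hA _ (hy1 x) (hy2 x)).2.1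
  have hBd : ∀ x, HasDerivAt B (1 / (2 * Real.cos (B x) ^ 2) * (Real.pi / m * n x)) x := fun x =>
    (hA _ (hy1 x) (hy2 x)).2.2.comp x (hyd x)
  have hT1d : ∀ x, HasDerivAt (fun x => Real.sin (B x))
      (Real.cos (B x) * (1 / (2 * Real.cos (B x) ^ 2) * (Real.pi / m * n x))) x := fun x =>
    (hBd x).sin
  have hT2y : ∀ z, dY (fun z : ℂ => Real.cos (B z.re) * (2 * (Q z / n z.re) - 1)) z
      = Real.cos (B z.re) * (2 * (dY Q z / n z.re)) := by
    intro z
    have hd : DifferentiableAt ℝ (fun z : ℂ => Real.cos (B z.re) * (2 * (Q z / n z.re) - 1)) z := by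
      have h2 : ContDiff ℝ 1 (fun z : ℂ => n z.re) := hnc.comp Complex.reCLM.contDiff
      have h3 : DifferentiableAt ℝ (fun z : ℂ => B z.re) z :=
        (hBc.differentiable one_ne_zero z.re).comp z Complex.reCLM.differentiableAt
      have h4 := (hQc.1.div h2 (fun z => (hn0 _).ne')).differentiable one_ne_zero z
      exact h3.cos.mul ((h4.const_mul 2).sub_const 1)
    simp only [dY]
    rw [← hd.lineDeriv_eq_fderiv]
    have hq : HasLineDerivAt ℝ Q (fderiv ℝ Q z Complex.I) z Complex.I :=
      (hQc.1.differentiable one_ne_zero z).hasFDerivAt.hasLineDerivAt _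
    apply HasLineDerivAt.lineDeriv
    unfold HasLineDerivAt at hq ⊢
    have := ((hq.div_const (n z.re)).const_mul 2).sub_const 1 |>.const_mul (Real.cos (B z.re))
    simpa using this
  refine ⟨fun x => Real.sin (B x), fun z => Real.cos (B z.re) * (2 * (Q z / n z.re) - 1),
    Real.contDiff_sin.comp hBc, ?_, ?_, ?_⟩
  · have h2 : ContDiff ℝ 1 (fun z : ℂ => n z.re) := hnc.comp Complex.reCLM.contDiff
    have h3 : ContDiff ℝ 1 (fun z : ℂ => B z.re) := hBc.comp Complex.reCLM.contDiff
    exact (Real.contDiff_cos.comp h3).mul ((contDiff_const.mul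
      (hQc.1.div h2 (fun z => (hn0 _).ne'))).sub contDiff_const)
  · intro z
    have h1 : 0 ≤ Q z / n z.re := div_nonneg (hQ0 z).le (hn0 _).le
    have h2 : Q z / n z.re ≤ 1 := (div_le_one (hn0 _)).2 (hQ1 z)
    have h3 : (2 * (Q z / n z.re) - 1) ^ 2 ≤ 1 := by nlinarith
    have h4 := Real.sin_sq_add_cos_sq (B z.re)
    have h5 : Real.cos (B z.re) ^ 2 * (2 * (Q z / n z.re) - 1) ^ 2 ≤ Real.cos (B z.re) ^ 2 :=
      mul_le_of_le_one_right (sq_nonneg _) h3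
    simp only
    rw [mul_pow]; linarith
  · intro z
    have hdy : 0 < dY Q z := by
      rw [hQy]
      exact (pos_int _ (by fun_prop) (fun ζ => mul_pos (ck_pos _) (ck_pos _))
        (fun ζ => mul_le_one₀ (ck_le _) (ck_pos _).le (ck_le _))).2
    have c0 := hcos z.re
    have n0 := hn0 z.re
    rw [(hT1d z.re).deriv, hT2y, ← hQy]
    refine ⟨by positivity, by positivity, ?_⟩
    field_simp


noncomputable def gn (f : ℂ → ℝ) (z : ℂ) : ℝ := Real.sqrt (dX f z ^ 2 + dY f z ^ 2)

lemma gn_cont {f : ℂ → ℝ} (hf : ContDiff ℝ 1 f) : Continuous (gn f) :=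
  Real.continuous_sqrt.comp (((cont_dX hf).pow 2).add ((cont_dY hf).pow 2))

lemma gn_compact {f : ℂ → ℝ} (hc : HasCompactSupport f) : HasCompactSupport (gn f) := by
  have hcx : HasCompactSupport (fderiv ℝ f) := hc.fderiv ℝ
  refine hcx.mono ?_
  intro z hz
  simp only [Function.mem_support] at hz ⊢
  contrapose! hz
  simp [gn, dX, dY, hz]

/-- The weak form of the Sobolev inequality, before passing to the limit. -/
lemma sobolev_step (φ : ℂ → ℝ) (hφ : ContDiff ℝ 1 φ) (hc : HasCompactSupport φ) (h0 : ∀ z, 0 ≤ φ z)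
    (g : ℂ → ℂ) (hg : Differentiable ℂ g) (hm : 0 < ∫ z, φ z ^ 2 * ‖deriv g z‖ ^ 2) :
    2 * Real.sqrt (Real.pi / ∫ z, φ z ^ 2 * ‖deriv g z‖ ^ 2) *
      ∫ z, φ z * Real.sqrt (∫ x, (ck ((g z).re - (g x).re) * ck ((g z).im - (g x).im)) *
        (φ x ^ 2 * ‖deriv g x‖ ^ 2)) * ‖deriv g z‖ ^ 2
      ≤ ∫ z, gn φ z * ‖deriv g z‖ := by
  set m := ∫ z, φ z ^ 2 * ‖deriv g z‖ ^ 2 with hmdef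
  have hgd : Differentiable ℂ (deriv g) := by
    have := hg.contDiff (n := 2)
    exact (this.iterate_deriv' 1 1).differentiable one_ne_zero
  have hgdc : Continuous (deriv g) := hgd.continuous
  set D : ℂ → ℝ := fun x => φ x ^ 2 * ‖deriv g x‖ ^ 2 with hD
  have hDc : Continuous D := by have := hφ.continuous; fun_prop
  have hD0 : ∀ x, 0 ≤ D x := fun x => by positivity
  have hDcs : HasCompactSupport D := by
    refine hc.mono ?_
    intro z hz; simp only [Function.mem_support, hD] at hz ⊢
    contrapose! hz; simp [hz]
  have hDi : Integrable D := hDc.integrable_of_hasCompactSupport hDcs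
  set D' : ℂ → NNReal := fun x => Real.toNNReal (D x) with hD'
  have hD'm : Measurable D' := (hDc.measurable).real_toNNReal
  set σ : Measure ℂ := volume.withDensity (fun x => (D' x : ENNReal)) with hσ
  have hσf : IsFiniteMeasure σ := by
    have := isFiniteMeasure_withDensity_ofReal hDi.2
    exact this
  set ν := Measure.map g σ with hν
  have hgm : AEMeasurable g σ := hg.continuous.aemeasurable
  have hνint : ∀ F : ℂ → ℝ, Continuous F → ∫ ζ, F ζ ∂ν = ∫ x, F (g x) * D x := by
    intro F hF
    rw [hν, integral_map hgm hF.aestronglyMeasurable, hσ, integral_withDensity_eq_integral_smul hD'm]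
    congr 1; ext x
    rw [NNReal.smul_def, smul_eq_mul, hD', Real.coe_toNNReal _ (hD0 x), mul_comm]
  have hνm : ν.real Set.univ = m := by
    have := hνint (fun _ => 1) continuous_const
    simpa using this
  obtain ⟨T1, T2, hT1, hT2, hT, hTd⟩ := knothe ν (by rw [hνm]; exact hm)
  have hck : Continuous ck := ck_contDiff.continuous
  have hρ : ∀ z : ℂ, ∫ ζ, ck (z.re - ζ.re) * ck (z.im - ζ.im) ∂ν
      = ∫ x, (ck (z.re - (g x).re) * ck (z.im - (g x).im)) * D x := fun z =>
    hνint _ (by fun_prop)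
  simp only [hρ, hνm] at hTd
  set ρ : ℂ → ℝ := fun z => ∫ x, (ck (z.re - (g x).re) * ck (z.im - (g x).im)) * D x with hρdef
  -- real derivatives
  have hgR : ∀ x, HasFDerivAt g ((ContinuousLinearMap.toSpanSingleton ℂ (deriv g x)).restrictScalars ℝ) x :=
    fun x => ((hg x).hasDerivAt.hasFDerivAt).restrictScalars ℝ
  have hgdR : ∀ x, HasFDerivAt (deriv g)
      ((ContinuousLinearMap.toSpanSingleton ℂ (deriv (deriv g) x)).restrictScalars ℝ) x :=
    fun x => ((hgd x).hasDerivAt.hasFDerivAt).restrictScalars ℝ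
  have hgC : ContDiff ℝ 1 g := (hg.contDiff (n := 1)).restrict_scalars ℝ
  have hgdC : ContDiff ℝ 1 (deriv g) := (hgd.contDiff (n := 1)).restrict_scalars ℝ
  set p : ℂ → ℝ := fun x => (deriv g x).re with hp
  set s : ℂ → ℝ := fun x => (deriv g x).im with hs
  have hpC : ContDiff ℝ 1 p := Complex.reCLM.contDiff.comp hgdC
  have hsC : ContDiff ℝ 1 s := Complex.imCLM.contDiff.comp hgdC
  have hpD : ∀ x v, fderiv ℝ p x v = (v * deriv (deriv g) x).re := by
    intro x v
    have := (Complex.reCLM.hasFDerivAt (x := deriv g x)).comp x (hgdR x)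
    have := this.fderiv
    change fderiv ℝ p x = _ at this
    rw [this]; simp
  have hsD : ∀ x v, fderiv ℝ s x v = (v * deriv (deriv g) x).im := by
    intro x v
    have := (Complex.imCLM.hasFDerivAt (x := deriv g x)).comp x (hgdR x)
    have := this.fderiv
    change fderiv ℝ s x = _ at this
    rw [this]; simp
  set t1 : ℂ → ℝ := fun x => T1 (g x).re with ht1
  set t2 : ℂ → ℝ := fun x => T2 (g x) with ht2
  have ht1C : ContDiff ℝ 1 t1 := hT1.comp (Complex.reCLM.contDiff.comp hgC)
  have ht2C : ContDiff ℝ 1 t2 := hT2.comp hgC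
  have ht1D : ∀ x v, fderiv ℝ t1 x v = deriv T1 (g x).re * (v * deriv g x).re := by
    intro x v
    have h1 := (Complex.reCLM.hasFDerivAt (x := g x)).comp x (hgR x)
    have h2 := ((hT1.differentiable one_ne_zero (g x).re).hasDerivAt).comp_hasFDerivAt x h1
    have := h2.fderiv
    change fderiv ℝ t1 x = _ at this
    rw [this]; simp
  have ht2D : ∀ x v, fderiv ℝ t2 x v = fderiv ℝ T2 (g x) (v * deriv g x) := by
    intro x v
    have h2 := ((hT2.differentiable one_ne_zero (g x)).hasFDerivAt).comp x (hgR x)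
    have := h2.fderiv
    change fderiv ℝ t2 x = _ at this
    rw [this]; simp
  have hlin : ∀ x (w : ℂ), fderiv ℝ T2 (g x) w
      = w.re * fderiv ℝ T2 (g x) 1 + w.im * fderiv ℝ T2 (g x) Complex.I := by
    intro x w
    have : w = w.re • (1 : ℂ) + w.im • Complex.I := by
      simp [Complex.re_add_im]
    conv_lhs => rw [this]
    rw [map_add, map_smul, map_smul]; simp
  set Z1 : ℂ → ℝ := fun x => t1 x * p x + t2 x * s x with hZ1
  set Z2 : ℂ → ℝ := fun x => t2 x * p x - t1 x * s x with hZ2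
  have hZ1C : ContDiff ℝ 1 Z1 := (ht1C.mul hpC).add (ht2C.mul hsC)
  have hZ2C : ContDiff ℝ 1 Z2 := (ht2C.mul hpC).sub (ht1C.mul hsC)
  have df : ∀ {f : ℂ → ℝ}, ContDiff ℝ 1 f → ∀ x, HasFDerivAt f (fderiv ℝ f x) x :=
    fun hf x => (hf.differentiable one_ne_zero x).hasFDerivAt
  have hdiv : ∀ x, dX Z1 x + dY Z2 x
      = (deriv T1 (g x).re + dY T2 (g x)) * ‖deriv g x‖ ^ 2 := by
    intro x
    have e1 : dX Z1 x = fderiv ℝ t1 x 1 * p x + t1 x * fderiv ℝ p x 1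
        + (fderiv ℝ t2 x 1 * s x + t2 x * fderiv ℝ s x 1) := by
      have := (((df ht1C x).mul (df hpC x)).add ((df ht2C x).mul (df hsC x))).fderiv
      change fderiv ℝ Z1 x = _ at this
      simp only [dX]; rw [this]; simp; ring
    have e2 : dY Z2 x = fderiv ℝ t2 x Complex.I * p x + t2 x * fderiv ℝ p x Complex.I
        - (fderiv ℝ t1 x Complex.I * s x + t1 x * fderiv ℝ s x Complex.I) := by
      have := (((df ht2C x).mul (df hpC x)).sub ((df ht1C x).mul (df hsC x))).fderiv
      change fderiv ℝ Z2 x = _ at this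
      simp only [dY]; rw [this]; simp; ring
    rw [e1, e2]
    simp only [hpD, hsD, ht1D, ht2D, hlin x (_ * _)]
    rw [← Complex.normSq_eq_norm_sq, Complex.normSq_apply]
    simp only [Complex.mul_re, Complex.mul_im, Complex.I_re, Complex.I_im, Complex.one_re,
      Complex.one_im, hp, hs, dY]
    ring
  have hY1 := int_fderiv_zero (fun x => φ x * Z1 x) (hφ.mul hZ1C) hc.mul_right 1
  have hY2 := int_fderiv_zero (fun x => φ x * Z2 x) (hφ.mul hZ2C) hc.mul_right Complex.I
  have e1 : ∀ z, fderiv ℝ (fun z => φ z * Z1 z) z 1 = dX φ z * Z1 z + φ z * dX Z1 z :=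
    fun z => dX_mul (hφ.differentiable one_ne_zero z) (hZ1C.differentiable one_ne_zero z)
  have e2 : ∀ z, fderiv ℝ (fun z => φ z * Z2 z) z Complex.I = dY φ z * Z2 z + φ z * dY Z2 z :=
    fun z => dY_mul (hφ.differentiable one_ne_zero z) (hZ2C.differentiable one_ne_zero z)
  simp only [e1, e2] at hY1 hY2
  have hcx : HasCompactSupport (dX φ) := hc.fderiv_apply ℝ 1
  have hcy : HasCompactSupport (dY φ) := hc.fderiv_apply ℝ Complex.I
  have i1 : Integrable (fun z => dX φ z * Z1 z) :=
    ((cont_dX hφ).mul hZ1C.continuous).integrable_of_hasCompactSupport hcx.mul_right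
  have i2 : Integrable (fun z => φ z * dX Z1 z) :=
    (hφ.continuous.mul (cont_dX hZ1C)).integrable_of_hasCompactSupport hc.mul_right
  have i3 : Integrable (fun z => dY φ z * Z2 z) :=
    ((cont_dY hφ).mul hZ2C.continuous).integrable_of_hasCompactSupport hcy.mul_right
  have i4 : Integrable (fun z => φ z * dY Z2 z) :=
    (hφ.continuous.mul (cont_dY hZ2C)).integrable_of_hasCompactSupport hc.mul_right
  have i5 : Integrable (fun z => gn φ z * ‖deriv g z‖) :=
    ((gn_cont hφ).mul hgdc.norm).integrable_of_hasCompactSupport (gn_compact hc).mul_right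
  have hsum : ∫ z, φ z * (dX Z1 z + dY Z2 z) = -∫ z, (dX φ z * Z1 z + dY φ z * Z2 z) := by
    rw [integral_add i1 i2] at hY1
    rw [integral_add i3 i4] at hY2
    have : ∫ z, φ z * (dX Z1 z + dY Z2 z) = (∫ z, φ z * dX Z1 z) + ∫ z, φ z * dY Z2 z := by
      rw [← integral_add i2 i4]; congr 1; ext z; ring
    rw [this, integral_add i1 i3]; linarith
  have hup : -∫ z, (dX φ z * Z1 z + dY φ z * Z2 z) ≤ ∫ z, gn φ z * ‖deriv g z‖ := by
    rw [← integral_neg]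
    apply integral_mono (i1.add i3).neg i5
    intro z
    simp only
    have hz : Z1 z ^ 2 + Z2 z ^ 2 ≤ ‖deriv g z‖ ^ 2 := by
      rw [← Complex.normSq_eq_norm_sq, Complex.normSq_apply]
      have h1 := hT (g z)
      have : Z1 z ^ 2 + Z2 z ^ 2 = (T1 (g z).re ^ 2 + T2 (g z) ^ 2) * (p z ^ 2 + s z ^ 2) := by
        simp only [hZ1, hZ2, ht1, ht2]; ring
      rw [this]
      calc _ ≤ 1 * (p z ^ 2 + s z ^ 2) := mul_le_mul_of_nonneg_right h1 (by positivity)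
        _ = _ := by simp only [hp, hs]; ring
    have h2 : (dX φ z * Z1 z + dY φ z * Z2 z) ^ 2 ≤ (gn φ z * ‖deriv g z‖) ^ 2 := by
      rw [mul_pow, gn, Real.sq_sqrt (by positivity)]
      calc (dX φ z * Z1 z + dY φ z * Z2 z) ^ 2
          ≤ (dX φ z ^ 2 + dY φ z ^ 2) * (Z1 z ^ 2 + Z2 z ^ 2) := by
            nlinarith [sq_nonneg (dX φ z * Z2 z - dY φ z * Z1 z)]
        _ ≤ _ := mul_le_mul_of_nonneg_left hz (by positivity)
    have h3 : 0 ≤ gn φ z * ‖deriv g z‖ := mul_nonneg (Real.sqrt_nonneg _) (norm_nonneg _)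
    have := abs_le_of_sq_le_sq h2 h3
    change -(dX φ z * Z1 z + dY φ z * Z2 z) ≤ _
    linarith [neg_abs_le (dX φ z * Z1 z + dY φ z * Z2 z)]
  refine le_trans ?_ (hsum.le.trans hup)
  rw [← integral_const_mul]
  have hρ0 : ∀ z, 0 ≤ ρ z := fun z => integral_nonneg fun x =>
    mul_nonneg (mul_pos (ck_pos _) (ck_pos _)).le (hD0 x)
  have hpt : ∀ z, 2 * Real.sqrt (Real.pi / m) * (φ z * Real.sqrt (ρ (g z)) * ‖deriv g z‖ ^ 2)
      ≤ φ z * (dX Z1 z + dY Z2 z) := by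
    intro z
    rw [hdiv]
    obtain ⟨q1, q2, q3⟩ := hTd (g z)
    have h1 : Real.sqrt (Real.pi / m) * Real.sqrt (ρ (g z))
        = Real.sqrt (deriv T1 (g z).re * dY T2 (g z)) := by
      rw [q3, Real.sqrt_mul (by positivity)]
    have h2 : 2 * Real.sqrt (deriv T1 (g z).re * dY T2 (g z))
        ≤ deriv T1 (g z).re + dY T2 (g z) := by
      rw [Real.sqrt_mul q1]
      have := sq_nonneg (Real.sqrt (deriv T1 (g z).re) - Real.sqrt (dY T2 (g z)))
      have a1 := Real.sq_sqrt q1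
      have a2 := Real.sq_sqrt q2
      nlinarith
    calc _ = (φ z * ‖deriv g z‖ ^ 2) * (2 * (Real.sqrt (Real.pi / m) * Real.sqrt (ρ (g z)))) := by ring
      _ ≤ (φ z * ‖deriv g z‖ ^ 2) * (deriv T1 (g z).re + dY T2 (g z)) := by
        apply mul_le_mul_of_nonneg_left _ (mul_nonneg (h0 z) (by positivity))
        rw [h1]; exact h2
      _ = _ := by ring
  apply integral_mono_of_nonneg
  · exact Eventually.of_forall fun z => mul_nonneg (by positivity)
      (mul_nonneg (mul_nonneg (h0 z) (Real.sqrt_nonneg _)) (by positivity))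
  · have : (fun z => φ z * (dX Z1 z + dY Z2 z)) = fun z => φ z * dX Z1 z + φ z * dY Z2 z := by
      ext z; ring
    rw [this]; exact i2.add i4
  · exact Eventually.of_forall hpt


noncomputable def kap (w : ℂ) : ℝ := ck w.re * ck w.im

lemma kap_pos (w : ℂ) : 0 < kap w := mul_pos (ck_pos _) (ck_pos _)
lemma kap_le (w : ℂ) : kap w ≤ 1 := mul_le_one₀ (ck_le _) (ck_pos _).le (ck_le _)
lemma kap_cont : Continuous kap :=
  (ck_contDiff.continuous.comp Complex.continuous_re).mul
    (ck_contDiff.continuous.comp Complex.continuous_im)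

lemma lint_ck : ∫⁻ t, ENNReal.ofReal (ck t) = 1 := by
  have hi : Integrable ck := integrable_inv_one_add_sq.const_mul _
  rw [← ofReal_integral_eq_lintegral_ofReal hi (Eventually.of_forall fun t => (ck_pos t).le)]
  have : ∫ t, ck t = 1 := by
    simp only [ck]
    rw [integral_const_mul, integral_univ_inv_one_add_sq]
    field_simp
  rw [this]; simp

lemma lint_kap : ∫⁻ w, ENNReal.ofReal (kap w) = 1 := by
  rw [← (Complex.volume_preserving_equiv_real_prod.symm).lintegral_comp_emb
    (MeasurableEquiv.measurableEmbedding _)]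
  have : ∀ p : ℝ × ℝ, ENNReal.ofReal (kap (Complex.measurableEquivRealProd.symm p))
      = ENNReal.ofReal (ck p.1) * ENNReal.ofReal (ck p.2) := by
    intro p
    rw [← ENNReal.ofReal_mul (ck_pos _).le]
    simp [kap]
  simp only [this]
  have hm : Measurable fun t => ENNReal.ofReal (ck t) :=
    ck_contDiff.continuous.measurable.ennreal_ofReal
  rw [Measure.volume_eq_prod, lintegral_prod_mul hm.aemeasurable hm.aemeasurable, lint_ck, one_mul]

lemma lint_kap_mul (c : ℂ) (hc : c ≠ 0) :
    ∫⁻ y, ENNReal.ofReal (kap (c * y) * ‖c‖ ^ 2) = 1 := by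
  have hdet : LinearMap.det (LinearMap.mulLeft ℝ c) = ‖c‖ ^ 2 := by
    have : Algebra.norm ℝ c = ‖c‖ ^ 2 := by
      rw [Algebra.norm_complex_apply, Complex.normSq_eq_norm_sq]
    rw [← this, Algebra.norm_apply]; rfl
  have hne : LinearMap.det (LinearMap.mulLeft ℝ c) ≠ 0 := by
    rw [hdet]; simpa using hc
  have hmap := Measure.map_linearMap_addHaar_eq_smul_addHaar (volume : Measure ℂ) hne
  rw [hdet] at hmap
  have hn : 0 < ‖c‖ := norm_pos_iff.2 hc
  have hm : Measurable fun w => ENNReal.ofReal (kap w) := kap_cont.measurable.ennreal_ofReal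
  have h1 : ∫⁻ y, ENNReal.ofReal (kap (c * y)) = ENNReal.ofReal |(‖c‖ ^ 2)⁻¹| := by
    have h2 : ∫⁻ y, ENNReal.ofReal (kap y) ∂(Measure.map (LinearMap.mulLeft ℝ c) volume)
        = ∫⁻ y, ENNReal.ofReal (kap (c * y)) := by
      rw [lintegral_map hm]
      · rfl
      · exact (continuous_const.mul continuous_id).measurable
    rw [← h2, hmap, lintegral_smul_measure, lint_kap]; simp
  have : ∀ y, ENNReal.ofReal (kap (c * y) * ‖c‖ ^ 2)
      = ENNReal.ofReal (kap (c * y)) * ENNReal.ofReal (‖c‖ ^ 2) := fun y =>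
    ENNReal.ofReal_mul (kap_pos _).le
  simp only [this]
  rw [lintegral_mul_const, h1, ← ENNReal.ofReal_mul (abs_nonneg _), abs_of_pos (by positivity),
    inv_mul_cancel₀ (by positivity)]
  · simp
  · exact hm.comp (continuous_const.mul continuous_id).measurable

lemma rho_liminf (g : ℂ → ℂ) (hg : Differentiable ℂ g) (D : ℂ → ℝ) (hD : Continuous D)
    (hD0 : ∀ x, 0 ≤ D x)
    (hDc : HasCompactSupport D) (z : ℂ) (hz : deriv g z ≠ 0) :
    ENNReal.ofReal (D z / ‖deriv g z‖ ^ 2) ≤ liminf (fun n : ℕ => ENNReal.ofReal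
      (∫ x, kap (((n : ℝ) + 1 : ℝ) * (g z - g x)) * (D x * ((n : ℝ) + 1) ^ 2))) atTop := by
  have hgc : Continuous g := hg.continuous
  have hkc := kap_cont
  set N : ℕ → ℝ := fun n => (n : ℝ) + 1 with hN
  have hN0 : ∀ n, 0 < N n := fun n => by positivity
  set G : ℕ → ℂ → ℝ := fun n y => kap ((N n : ℝ) * (g z - g (z + (N n)⁻¹ • y))) * D (z + (N n)⁻¹ • y)
    with hG
  have key : ∀ n, ENNReal.ofReal (∫ x, kap ((N n : ℝ) * (g z - g x)) * (D x * (N n) ^ 2))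
      = ∫⁻ y, ENNReal.ofReal (G n y) := by
    intro n
    have n0 := hN0 n
    have hi : Integrable (fun x => kap ((N n : ℝ) * (g z - g x)) * D x) := by
      apply Continuous.integrable_of_hasCompactSupport
      · fun_prop
      · exact hDc.mul_left
    have hGi : Integrable (G n) := (hi.comp_add_left z).comp_smul (inv_ne_zero n0.ne')
    rw [← ofReal_integral_eq_lintegral_ofReal hGi
      (Eventually.of_forall fun y => mul_nonneg (kap_pos _).le (hD0 _))]
    congr 1
    have h1 := Measure.integral_comp_smul (volume : Measure ℂ)
      (fun x => kap ((N n : ℝ) * (g z - g (z + x))) * D (z + x)) (N n)⁻¹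
    have h2 := integral_add_left_eq_self (μ := (volume : Measure ℂ))
      (fun x => kap ((N n : ℝ) * (g z - g x)) * D x) z
    rw [h2, Complex.finrank_real_complex, inv_pow, inv_inv, abs_of_pos (by positivity)] at h1
    rw [hG]; simp only
    rw [h1, smul_eq_mul, ← integral_const_mul]
    congr 1; ext x; ring
  change _ ≤ liminf (fun n : ℕ => ENNReal.ofReal
      (∫ x, kap ((N n : ℝ) * (g z - g x)) * (D x * (N n) ^ 2))) atTop
  simp only [key]
  have hGm : ∀ n, Measurable fun y => ENNReal.ofReal (G n y) := by
    intro n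
    apply Measurable.ennreal_ofReal
    apply Continuous.measurable
    simp only [hG]; fun_prop
  refine le_trans ?_ (lintegral_liminf_le hGm)
  have hlim : ∀ y, Tendsto (fun n => G n y) atTop (nhds (kap (-deriv g z * y) * D z)) := by
    intro y
    have hNt : Tendsto (fun n => (N n)⁻¹) atTop (nhds 0) := by
      have := tendsto_one_div_add_atTop_nhds_zero_nat (𝕜 := ℝ)
      simpa [hN] using this
    have t1 : Tendsto (fun n => z + (N n)⁻¹ • y) atTop (nhds z) := by
      have := (hNt.smul_const y).const_add z
      simpa using this
    have t2 : Tendsto (fun n => ((N n : ℝ) : ℂ) * (g z - g (z + (N n)⁻¹ • y))) atTop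
        (nhds (-deriv g z * y)) := by
      have hl : HasDerivAt (fun t : ℝ => g (z + t • y)) (deriv g z * y) 0 := by
        have h1 : HasDerivAt g (deriv g z) (z + (0:ℝ) • y) := by
          simpa using (hg z).hasDerivAt
        have h2 : HasDerivAt (fun t : ℝ => z + t • y) y 0 := by
          have := ((hasDerivAt_id (0:ℝ)).smul_const y).const_add z
          simpa using this
        exact h1.comp (0:ℝ) h2
      have h3 := hl.tendsto_slope_zero
      have h4 : Tendsto (fun n => (N n)⁻¹) atTop (nhdsWithin 0 {0}ᶜ) :=
        tendsto_nhdsWithin_iff.2 ⟨hNt, Eventually.of_forall fun n => by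
          simpa using (inv_ne_zero (hN0 n).ne')⟩
      have h5 := (h3.comp h4).neg
      rw [neg_mul]
      refine h5.congr fun n => ?_
      simp only [Function.comp, zero_add, zero_smul, add_zero, inv_inv, Complex.real_smul]
      ring
    exact ((hkc.tendsto _).comp t2).mul ((hD.tendsto _).comp t1)
  have heq : ∀ y, liminf (fun n => ENNReal.ofReal (G n y)) atTop
      = ENNReal.ofReal (D z / ‖deriv g z‖ ^ 2) *
        ENNReal.ofReal (kap (-deriv g z * y) * ‖-deriv g z‖ ^ 2) := by
    intro y
    have h6 := ((ENNReal.continuous_ofReal.tendsto _).comp (hlim y)).liminf_eq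
    simp only [Function.comp_def] at h6
    rw [h6, ← ENNReal.ofReal_mul (div_nonneg (hD0 z) (by positivity))]
    congr 1
    rw [norm_neg]
    have : ‖deriv g z‖ ≠ 0 := by simpa using hz
    field_simp
  simp only [heq]
  rw [lintegral_const_mul, lint_kap_mul _ (by simpa using hz), mul_one]
  apply Measurable.ennreal_ofReal
  apply Continuous.measurable
  fun_prop

/-- The Sobolev (isoperimetric) inequality with sharp constant, for a conformally flat weight. -/
lemma sobolev (φ : ℂ → ℝ) (hφ : ContDiff ℝ 1 φ) (hc : HasCompactSupport φ) (h0 : ∀ z, 0 ≤ φ z)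
    (g : ℂ → ℂ) (hg : Differentiable ℂ g) :
    4 * Real.pi * (∫ z, φ z ^ 2 * ‖deriv g z‖ ^ 2) ≤ (∫ z, gn φ z * ‖deriv g z‖) ^ 2 := by
  set m := ∫ z, φ z ^ 2 * ‖deriv g z‖ ^ 2 with hmdef
  set P := ∫ z, gn φ z * ‖deriv g z‖ with hP
  have hpi := Real.pi_pos
  have hP0 : 0 ≤ P := integral_nonneg fun z => mul_nonneg (Real.sqrt_nonneg _) (norm_nonneg _)
  have hm0 : 0 ≤ m := integral_nonneg fun z => by positivity
  rcases hm0.eq_or_lt with hm | hm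
  · rw [← hm]; simp; positivity
  have hφc := hφ.continuous
  have hgc := hg.continuous
  have hkc := kap_cont
  have hgdc : Continuous (deriv g) := by
    have := hg.contDiff (n := 1)
    exact this.continuous_deriv le_rfl
  set D : ℂ → ℝ := fun x => φ x ^ 2 * ‖deriv g x‖ ^ 2 with hD
  have hDc : Continuous D := by fun_prop
  have hD0 : ∀ x, 0 ≤ D x := fun x => by positivity
  have hDcs : HasCompactSupport D := by
    refine hc.mono ?_
    intro z hz; simp only [Function.mem_support, hD] at hz ⊢
    contrapose! hz; simp [hz]
  have hDi : Integrable D := hDc.integrable_of_hasCompactSupport hDcs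
  set N : ℕ → ℝ := fun n => (n : ℝ) + 1 with hN
  have hN0 : ∀ n, 0 < N n := fun n => by positivity
  set ρ : ℕ → ℂ → ℝ := fun n z => ∫ x, kap ((N n : ℝ) * (g z - g x)) * (D x * (N n) ^ 2) with hρ
  have hρ0 : ∀ n z, 0 ≤ ρ n z := fun n z => integral_nonneg fun x =>
    mul_nonneg (kap_pos _).le (mul_nonneg (hD0 x) (by positivity))
  have hρc : ∀ n, Continuous (ρ n) := by
    intro n
    apply continuous_of_dominated (bound := fun x => D x * (N n) ^ 2)
    · intro z; apply Continuous.aestronglyMeasurable; fun_prop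
    · intro z; refine Eventually.of_forall fun x => ?_
      rw [Real.norm_eq_abs, abs_of_nonneg (mul_nonneg (kap_pos _).le (mul_nonneg (hD0 x) (by positivity)))]
      exact mul_le_of_le_one_left (mul_nonneg (hD0 x) (by positivity)) (kap_le _)
    · exact hDi.mul_const _
    · refine Eventually.of_forall fun x => ?_
      fun_prop
  have step : ∀ n, 2 * Real.sqrt (Real.pi / m) * ∫ z, φ z * Real.sqrt (ρ n z) * ‖deriv g z‖ ^ 2 ≤ P := by
    intro n
    have n0 := hN0 n
    have hd : ∀ z, deriv (fun z => ((N n : ℝ) : ℂ) * g z) z = ((N n : ℝ) : ℂ) * deriv g z := fun z =>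
      deriv_const_mul _ (hg z)
    have hnorm : ∀ z, ‖((N n : ℝ) : ℂ) * deriv g z‖ = N n * ‖deriv g z‖ := by
      intro z; rw [norm_mul, Complex.norm_real, Real.norm_eq_abs, abs_of_pos n0]
    have em : ∫ z, φ z ^ 2 * (N n * ‖deriv g z‖) ^ 2 = (N n) ^ 2 * m := by
      rw [hmdef, ← integral_const_mul]; congr 1; ext z; ring
    have h := sobolev_step φ hφ hc h0 (fun z => ((N n : ℝ) : ℂ) * g z) (hg.const_mul _)
      (by simp only [hd, hnorm]; rw [em]; positivity)
    simp only [hd, hnorm] at h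
    rw [em] at h
    have e1 : ∀ z, ∫ x, (ck ((((N n : ℝ) : ℂ) * g z).re - (((N n : ℝ) : ℂ) * g x).re) *
        ck ((((N n : ℝ) : ℂ) * g z).im - (((N n : ℝ) : ℂ) * g x).im)) *
        (φ x ^ 2 * (N n * ‖deriv g x‖) ^ 2) = ρ n z := by
      intro z
      simp only [hρ]
      congr 1; ext x
      rw [← Complex.sub_re, ← Complex.sub_im, ← mul_sub]
      simp only [kap, hD]; ring
    simp only [e1] at h
    have e2 : ∫ z, φ z * Real.sqrt (ρ n z) * (N n * ‖deriv g z‖) ^ 2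
        = (N n) ^ 2 * ∫ z, φ z * Real.sqrt (ρ n z) * ‖deriv g z‖ ^ 2 := by
      rw [← integral_const_mul]; congr 1; ext z; ring
    have e3 : ∫ z, gn φ z * (N n * ‖deriv g z‖) = N n * P := by
      rw [hP, ← integral_const_mul]; congr 1; ext z; ring
    have e4 : Real.sqrt (Real.pi / ((N n) ^ 2 * m)) = Real.sqrt (Real.pi / m) / N n := by
      rw [mul_comm, ← div_div, Real.sqrt_div (by positivity), Real.sqrt_sq n0.le]
    rw [e2, e3, e4] at h
    have : 2 * (Real.sqrt (Real.pi / m) / N n) *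
        ((N n) ^ 2 * ∫ z, φ z * Real.sqrt (ρ n z) * ‖deriv g z‖ ^ 2)
        = N n * (2 * Real.sqrt (Real.pi / m) * ∫ z, φ z * Real.sqrt (ρ n z) * ‖deriv g z‖ ^ 2) := by
      field_simp
    rw [this] at h
    exact le_of_mul_le_mul_left h n0
  set s := Real.sqrt (Real.pi / m) with hs
  have hs0 : 0 < s := Real.sqrt_pos.2 (by positivity)
  have hFc : ∀ n, Continuous fun z => φ z * Real.sqrt (ρ n z) * ‖deriv g z‖ ^ 2 := by
    intro n; have := hρc n; fun_prop
  have hF0 : ∀ n z, 0 ≤ φ z * Real.sqrt (ρ n z) * ‖deriv g z‖ ^ 2 := fun n z =>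
    mul_nonneg (mul_nonneg (h0 z) (Real.sqrt_nonneg _)) (by positivity)
  have hFi : ∀ n, Integrable fun z => φ z * Real.sqrt (ρ n z) * ‖deriv g z‖ ^ 2 := by
    intro n
    apply (hFc n).integrable_of_hasCompactSupport
    exact (hc.mul_right).mul_right
  have fat := lintegral_liminf_le (μ := (volume : Measure ℂ)) (u := atTop)
    (f := fun n z => ENNReal.ofReal (φ z * Real.sqrt (ρ n z) * ‖deriv g z‖ ^ 2))
    (fun n => (hFc n).measurable.ennreal_ofReal)
  have up : liminf (fun n => ∫⁻ z, ENNReal.ofReal (φ z * Real.sqrt (ρ n z) * ‖deriv g z‖ ^ 2)) atTop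
      ≤ ENNReal.ofReal (P / (2 * s)) := by
    refine liminf_le_of_frequently_le' (Frequently.of_forall fun n => ?_)
    rw [← ofReal_integral_eq_lintegral_ofReal (hFi n) (Eventually.of_forall (hF0 n))]
    apply ENNReal.ofReal_le_ofReal
    rw [le_div_iff₀ (by positivity)]
    linarith [step n]
  have lo : ENNReal.ofReal m ≤ ∫⁻ z, liminf (fun n => ENNReal.ofReal
      (φ z * Real.sqrt (ρ n z) * ‖deriv g z‖ ^ 2)) atTop := by
    rw [hmdef, ofReal_integral_eq_lintegral_ofReal hDi (Eventually.of_forall hD0)]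
    apply lintegral_mono
    intro z
    simp only
    by_cases hz : deriv g z = 0
    · simp [hD, hz]
    have hz' : 0 < ‖deriv g z‖ := norm_pos_iff.2 hz
    have h1 := rho_liminf g hg D hDc hD0 hDcs z hz
    change _ ≤ liminf (fun n : ℕ => ENNReal.ofReal (ρ n z)) atTop at h1
    set f : ENNReal → ENNReal := fun x => ENNReal.ofReal (φ z * ‖deriv g z‖ ^ 2) * x ^ ((1:ℝ)/2)
      with hf
    have fm : Monotone f := by
      intro x y hxy
      exact mul_le_mul_right (ENNReal.rpow_le_rpow hxy (by norm_num)) _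
    have fc : Continuous f := by
      apply (ENNReal.continuous_const_mul ENNReal.ofReal_ne_top).comp
      exact ENNReal.continuous_rpow_const
    have fv : ∀ t : ℝ, 0 ≤ t → f (ENNReal.ofReal t)
        = ENNReal.ofReal (φ z * Real.sqrt t * ‖deriv g z‖ ^ 2) := by
      intro t ht
      simp only [hf]
      rw [ENNReal.ofReal_rpow_of_nonneg ht (by norm_num), ← ENNReal.ofReal_mul
        (mul_nonneg (h0 z) (by positivity)), ← Real.sqrt_eq_rpow]
      congr 1; ring
    have h2 := fm h1
    rw [fm.map_liminf_of_continuousAt _ fc.continuousAt] at h2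
    have h3 : D z / ‖deriv g z‖ ^ 2 = φ z ^ 2 := by
      simp only [hD]; field_simp
    rw [h3, fv _ (by positivity), Real.sqrt_sq (h0 z)] at h2
    refine le_trans (le_of_eq ?_) (h2.trans (le_of_eq ?_))
    · congr 1; simp only [hD]; ring
    · congr 1; ext n; simp only [Function.comp]; rw [fv _ (hρ0 n z)]
  have fin := (lo.trans fat).trans up
  rw [ENNReal.ofReal_le_ofReal_iff (by positivity), le_div_iff₀ (by positivity)] at fin
  have hss : s ^ 2 = Real.pi / m := Real.sq_sqrt (by positivity)
  have : (m * (2 * s)) ^ 2 ≤ P ^ 2 := pow_le_pow_left₀ (by positivity) fin 2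
  have h4 : (m * (2 * s)) ^ 2 = 4 * Real.pi * m := by
    rw [mul_pow, mul_pow, hss]; field_simp; ring
  linarith


noncomputable def eta (x : ℝ) : ℝ := Real.smoothTransition x

lemma eta_cd : ContDiff ℝ 2 eta := Real.smoothTransition.contDiff (n := 2)
lemma eta_cont : Continuous eta := eta_cd.continuous
lemma eta_dcont : Continuous (deriv eta) := eta_cd.continuous_deriv (by norm_num)
lemma eta_has (x : ℝ) : HasDerivAt eta (deriv eta x) x :=
  (eta_cd.differentiable two_ne_zero x).hasDerivAt
lemma eta_nonneg (x : ℝ) : 0 ≤ eta x := Real.smoothTransition.nonneg x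
lemma eta_le (x : ℝ) : eta x ≤ 1 := Real.smoothTransition.le_one x
lemma eta_d_nonneg (x : ℝ) : 0 ≤ deriv eta x := Real.smoothTransition.monotone.deriv_nonneg
lemma eta_zero {x : ℝ} (h : x ≤ 0) : eta x = 0 := Real.smoothTransition.zero_of_nonpos h
lemma eta_one {x : ℝ} (h : 1 ≤ x) : eta x = 1 := Real.smoothTransition.one_of_one_le h
lemma eta_d_zero {x : ℝ} (h : x < 0) : deriv eta x = 0 := by
  have : eta =ᶠ[nhds x] fun _ => 0 := by
    filter_upwards [Iio_mem_nhds h] with y hy using eta_zero hy.le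
  rw [this.deriv_eq]; simp
lemma eta_d_one {x : ℝ} (h : 1 < x) : deriv eta x = 0 := by
  have : eta =ᶠ[nhds x] fun _ => 1 := by
    filter_upwards [Ioi_mem_nhds h] with y hy using eta_one hy.le
  rw [this.deriv_eq]; simp
lemma eta_d_bdd : ∃ C : ℝ, 0 ≤ C ∧ ∀ x, |deriv eta x| ≤ C := by
  obtain ⟨C, hC⟩ := (isCompact_Icc (a := (0:ℝ)) (b := 1)).exists_bound_of_continuousOn
    eta_dcont.continuousOn
  refine ⟨max C 0, le_max_right _ _, fun x => ?_⟩
  by_cases h0 : x < 0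
  · rw [eta_d_zero h0]; simp
  by_cases h1 : 1 < x
  · rw [eta_d_one h1]; simp
  exact (hC x ⟨not_lt.1 h0, not_lt.1 h1⟩).trans (le_max_left _ _)

lemma cauchy_schwarz_w {α : Type*} [MeasurableSpace α] (μ : Measure α) (w A B : α → ℝ) (hw : ∀ x, 0 ≤ w x)
    (h1 : Integrable (fun x => w x * A x ^ 2) μ) (h2 : Integrable (fun x => w x * (A x * B x)) μ)
    (h3 : Integrable (fun x => w x * B x ^ 2) μ) :
    (∫ x, w x * (A x * B x) ∂μ) ^ 2 ≤ (∫ x, w x * A x ^ 2 ∂μ) * ∫ x, w x * B x ^ 2 ∂μ := by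
  have key : ∀ s : ℝ, 0 ≤ (∫ x, w x * A x ^ 2 ∂μ) * (s * s) + (2 * ∫ x, w x * (A x * B x) ∂μ) * s
      + ∫ x, w x * B x ^ 2 ∂μ := by
    intro s
    have : (∫ x, w x * A x ^ 2 ∂μ) * (s * s) + (2 * ∫ x, w x * (A x * B x) ∂μ) * s
      + ∫ x, w x * B x ^ 2 ∂μ = ∫ x, w x * (s * A x + B x) ^ 2 ∂μ := by
      have e : (fun x => w x * (s * A x + B x) ^ 2)
          = fun x => (s * s) * (w x * A x ^ 2) + (2 * s) * (w x * (A x * B x)) + w x * B x ^ 2 := by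
        ext x; ring
      have i12 : Integrable (fun x => (s * s) * (w x * A x ^ 2) + (2 * s) * (w x * (A x * B x))) μ :=
        (h1.const_mul _).add (h2.const_mul _)
      rw [e, integral_add i12 h3,
        integral_add (h1.const_mul _) (h2.const_mul _), integral_const_mul, integral_const_mul]
      ring
    rw [this]
    exact integral_nonneg fun x => mul_nonneg (hw x) (sq_nonneg _)
  have := discrim_le_zero key
  unfold discrim at this
  nlinarith

lemma dlevel (W : ℂ → ℝ) (hW : ContDiff ℝ 2 W) (δ t : ℝ) (z v : ℂ) :
    fderiv ℝ (fun z => eta ((W z - t) / δ)) z v = deriv eta ((W z - t) / δ) / δ * fderiv ℝ W z v := by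
  have h1 : HasFDerivAt (fun z => (W z - t) / δ) (δ⁻¹ • fderiv ℝ W z) z := by
    have := (((hW.differentiable two_ne_zero z).hasFDerivAt).sub_const t).const_smul δ⁻¹
    refine HasFDerivAt.congr_of_eventuallyEq this (Eventually.of_forall fun x => ?_)
    simp; ring
  have h2 := (eta_has ((W z - t) / δ)).comp_hasFDerivAt z h1
  have h3 := h2.fderiv
  change fderiv ℝ (fun z => eta ((W z - t) / δ)) z = _ at h3
  rw [h3]; simp; ring

lemma lvl_sob (W : ℂ → ℝ) (hW : ContDiff ℝ 2 W) (hK : IsCompact {z | 0 ≤ W z})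
    (g : ℂ → ℂ) (hg : Differentiable ℂ g) (δ : ℝ) (hδ : 0 < δ) (t : ℝ) (ht : 0 ≤ t) :
    4 * Real.pi * (∫ z, eta ((W z - t) / δ) ^ 2 * ‖deriv g z‖ ^ 2)
      ≤ (∫ z, eta ((W z - t) / δ) * (-(lapC W z)))
        * ∫ z, deriv eta ((W z - t) / δ) / δ * ‖deriv g z‖ ^ 2 := by
  have hgdc : Continuous (deriv g) := (hg.contDiff (n := 1)).continuous_deriv le_rfl
  have hWc := hW.continuous
  have hed := eta_dcont
  set φ : ℂ → ℝ := fun z => eta ((W z - t) / δ) with hφ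
  set w : ℂ → ℝ := fun z => deriv eta ((W z - t) / δ) / δ with hw
  have hφC : ContDiff ℝ 1 φ :=
    (eta_cd.of_le (by norm_num)).comp (((hW.of_le (by norm_num)).sub contDiff_const).div_const δ)
  have hφs : HasCompactSupport φ := by
    refine HasCompactSupport.intro hK fun z hz => ?_
    apply eta_zero
    simp only [Set.mem_ofPred_eq, not_le] at hz
    apply div_nonpos_of_nonpos_of_nonneg _ hδ.le
    linarith
  have hws : HasCompactSupport w := by
    refine HasCompactSupport.intro hK fun z hz => ?_
    simp only [Set.mem_ofPred_eq, not_le] at hz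
    simp only [hw]
    rw [eta_d_zero (div_neg_of_neg_of_pos (by linarith) hδ)]; simp
  have hwc : Continuous w := by fun_prop
  have hw0 : ∀ z, 0 ≤ w z := fun z => div_nonneg (eta_d_nonneg _) hδ.le
  have h1 := sobolev φ hφC hφs (fun z => eta_nonneg _) g hg
  have dxφ : ∀ z, dX φ z = w z * dX W z := fun z => dlevel W hW δ t z 1
  have dyφ : ∀ z, dY φ z = w z * dY W z := fun z => dlevel W hW δ t z Complex.I
  have hgn : ∀ z, gn φ z = w z * gn W z := by
    intro z
    simp only [gn, dxφ, dyφ]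
    rw [show (w z * dX W z) ^ 2 + (w z * dY W z) ^ 2 = w z ^ 2 * (dX W z ^ 2 + dY W z ^ 2) by ring,
      Real.sqrt_mul (sq_nonneg _), Real.sqrt_sq (hw0 z)]
  have hgW := gn_cont (hW.of_le (by norm_num : (1 : WithTop ℕ∞) ≤ 2))
  have h2 := cauchy_schwarz_w volume w (gn W) (fun z => ‖deriv g z‖) hw0
    ((hwc.mul (hgW.pow 2)).integrable_of_hasCompactSupport hws.mul_right)
    ((hwc.mul (hgW.mul hgdc.norm)).integrable_of_hasCompactSupport hws.mul_right)
    ((hwc.mul (hgdc.norm.pow 2)).integrable_of_hasCompactSupport hws.mul_right)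
  have h3 := green φ W hφC hφs hW
  have h4 : ∫ z, w z * gn W z ^ 2 = ∫ z, φ z * (-(lapC W z)) := by
    rw [← h3]; congr 1; ext z
    rw [dxφ, dyφ, gn, Real.sq_sqrt (by positivity)]; ring
  have h5 : ∫ z, gn φ z * ‖deriv g z‖ = ∫ z, w z * (gn W z * ‖deriv g z‖) := by
    congr 1; ext z; rw [hgn]; ring
  rw [h5] at h1
  rw [h4] at h2
  exact h1.trans h2

/-- derivative of the level integrals -/
lemma lvl_deriv (W : ℂ → ℝ) (hW : Continuous W) (K : Set ℂ) (hK : IsCompact K)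
    (F : ℂ → ℝ) (hF : Continuous F) (δ : ℝ) (hδ : 0 < δ) (t : ℝ) :
    HasDerivAt (fun t => ∫ z in K, eta ((W z - t) / δ) * F z)
      (-∫ z in K, deriv eta ((W z - t) / δ) / δ * F z) t := by
  have hed := eta_dcont
  have hec := eta_cont
  obtain ⟨C, hC0, hC⟩ := eta_d_bdd
  have int : ∀ G : ℂ → ℝ, Continuous G → Integrable G (volume.restrict K) := fun G hG =>
    hG.continuousOn.integrableOn_compact hK
  have := (hasDerivAt_integral_of_dominated_loc_of_deriv_le (μ := volume.restrict K)
    (F := fun t z => eta ((W z - t) / δ) * F z)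
    (F' := fun t z => -(deriv eta ((W z - t) / δ) / δ * F z)) (x₀ := t) (s := Set.univ)
    (bound := fun z => C / δ * ‖F z‖) univ_mem
    (Eventually.of_forall fun s => Continuous.aestronglyMeasurable (by fun_prop))
    (int _ (by fun_prop)) (Continuous.aestronglyMeasurable (by fun_prop))
    (Eventually.of_forall fun z s _ => ?_) (int _ (by fun_prop))
    (Eventually.of_forall fun z s _ => ?_)).2
  · rw [integral_neg] at this; exact this
  · rw [norm_neg, norm_mul, norm_div, Real.norm_eq_abs, Real.norm_eq_abs, abs_of_pos hδ]
    gcongr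
    exact hC _
  · have h1 : HasDerivAt (fun s => (W z - s) / δ) (-1 / δ) s :=
      ((hasDerivAt_id s).const_sub (W z)).div_const δ
    have h2 := ((eta_has ((W z - s) / δ)).comp s h1).mul_const (F z)
    refine HasDerivAt.congr_deriv (f := fun t => eta ((W z - t) / δ) * F z) h2 ?_
    ring

noncomputable def Psi (a b f : ℝ) : ℝ :=
  2 * Real.pi / b - ((max (4 * Real.pi - f) 0) ^ 2 / b + (max (f - 4 * Real.pi) 0) ^ 2 / a) / (8 * Real.pi)

noncomputable def Psi' (a b f : ℝ) : ℝ :=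
  max (4 * Real.pi - f) 0 / b / (4 * Real.pi) - max (f - 4 * Real.pi) 0 / a / (4 * Real.pi)

lemma hasDerivAt_max_sq (x : ℝ) : HasDerivAt (fun x : ℝ => (max x 0) ^ 2) (2 * max x 0) x := by
  rcases lt_trichotomy x 0 with h | h | h
  · have : (fun x : ℝ => (max x 0) ^ 2) =ᶠ[nhds x] fun _ => 0 := by
      filter_upwards [Iio_mem_nhds h] with y hy
      rw [max_eq_right (Set.mem_Iio.1 hy).le]; simp
    rw [max_eq_right h.le]
    simpa using (hasDerivAt_const x (0:ℝ)).congr_of_eventuallyEq this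
  · subst h
    simp only [max_self, mul_zero]
    rw [hasDerivAt_iff_isLittleO_nhds_zero]
    simp only [zero_add, max_self, smul_zero, sub_zero]
    have : (fun h : ℝ => (max h 0) ^ 2 - 0 ^ 2) =O[nhds 0] fun h : ℝ => h ^ 2 := by
      apply Asymptotics.IsBigO.of_bound 1
      refine Eventually.of_forall fun y => ?_
      rcases le_total y 0 with hy | hy
      · rw [max_eq_right hy]; simp; positivity
      · rw [max_eq_left hy]; simp
    refine this.trans_isLittleO ?_
    have := Asymptotics.isLittleO_pow_id (𝕜 := ℝ) (n := 2) (by norm_num)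
    exact this
  · have : (fun x : ℝ => (max x 0) ^ 2) =ᶠ[nhds x] fun x => x ^ 2 := by
      filter_upwards [Ioi_mem_nhds h] with y hy
      rw [max_eq_left (Set.mem_Ioi.1 hy).le]
    rw [max_eq_left h.le]
    simpa using (hasDerivAt_pow 2 x).congr_of_eventuallyEq this

lemma Psi_has (a b f : ℝ) : HasDerivAt (Psi a b) (Psi' a b f) f := by
  have h1 := ((hasDerivAt_max_sq (4 * Real.pi - f)).comp f ((hasDerivAt_id f).const_sub (4 * Real.pi)))
  have h2 := ((hasDerivAt_max_sq (f - 4 * Real.pi)).comp f ((hasDerivAt_id f).sub_const (4 * Real.pi)))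
  have h3 := (((h1.div_const b).add (h2.div_const a)).div_const (8 * Real.pi)).const_sub (2 * Real.pi / b)
  refine HasDerivAt.congr_deriv (f := Psi a b) h3 ?_
  unfold Psi'
  have := Real.pi_pos
  field_simp
  ring

lemma Psi_cont (a b : ℝ) : Continuous (Psi a b) :=
  continuous_iff_continuousAt.2 fun f => (Psi_has a b f).continuousAt

lemma Psi_zero (a b : ℝ) : Psi a b 0 = 0 := by
  have := Real.pi_pos
  unfold Psi
  rw [max_eq_left (by linarith), max_eq_right (by linarith)]
  field_simp
  ring

/-- algebraic core of the differential inequality -/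
lemma core_alg (a b f y fp H H1 t δ T : ℝ) (ha : 0 < a) (hb : 0 < b) (hf : 0 ≤ f) (hy : 0 ≤ y)
    (hδ : 0 < δ) (htT : t ≤ T) (h1 : 4 * Real.pi * H1 ≤ f * y) (hH : H1 ≤ H)
    (hl : a * Real.exp t * y ≤ fp) (hu : fp ≤ b * Real.exp (t + δ) * y) :
    Real.exp t * H - Real.exp t * y + Psi' a b f * fp + Real.exp T * (H1 - H)
      - (Real.exp δ - 1) * Real.exp T * y ≤ 0 := by
  have hpi := Real.pi_pos
  have e1 : Real.exp t ≤ Real.exp T := Real.exp_le_exp.2 htT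
  have e0 := Real.exp_pos t
  have ed : 1 ≤ Real.exp δ := by rw [← Real.exp_zero]; exact Real.exp_le_exp.2 hδ.le
  have key : Psi' a b f * fp ≤ (1 - f / (4 * Real.pi)) * (Real.exp t * y)
      + (Real.exp δ - 1) * (Real.exp t * y) := by
    have hy' : 0 ≤ Real.exp t * y := by positivity
    have hd' : 0 ≤ (Real.exp δ - 1) * (Real.exp t * y) := mul_nonneg (by linarith) hy'
    unfold Psi'
    rcases le_total f (4 * Real.pi) with h | h
    · rw [max_eq_left (by linarith), max_eq_right (by linarith)]
      have e2 : (4 * Real.pi - f) / b / (4 * Real.pi) - 0 / a / (4 * Real.pi)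
          = (1 - f / (4 * Real.pi)) / b := by field_simp; ring
      rw [e2]
      have h0 : 0 ≤ 1 - f / (4 * Real.pi) := by
        rw [sub_nonneg, div_le_one (by positivity)]; exact h
      have h2 : 0 ≤ f / (4 * Real.pi) := by positivity
      calc (1 - f / (4 * Real.pi)) / b * fp
          ≤ (1 - f / (4 * Real.pi)) / b * (b * Real.exp (t + δ) * y) :=
            mul_le_mul_of_nonneg_left hu (by positivity)
        _ = (1 - f / (4 * Real.pi)) * (Real.exp t * y)
          + (1 - f / (4 * Real.pi)) * ((Real.exp δ - 1) * (Real.exp t * y)) := by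
            rw [Real.exp_add]; field_simp; ring
        _ ≤ _ := by
          have := mul_le_of_le_one_left hd' (by linarith : 1 - f / (4 * Real.pi) ≤ 1)
          linarith
    · rw [max_eq_right (by linarith), max_eq_left (by linarith)]
      have e2 : 0 / b / (4 * Real.pi) - (f - 4 * Real.pi) / a / (4 * Real.pi)
          = (1 - f / (4 * Real.pi)) / a := by field_simp; ring
      rw [e2]
      have h0 : 1 - f / (4 * Real.pi) ≤ 0 := by
        rw [sub_nonpos, one_le_div (by positivity)]; exact h
      have h3 : (1 - f / (4 * Real.pi)) / a ≤ 0 := div_nonpos_of_nonpos_of_nonneg h0 ha.le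
      have := mul_le_mul_of_nonpos_left hl h3
      have e4 : (1 - f / (4 * Real.pi)) / a * (a * Real.exp t * y)
        = (1 - f / (4 * Real.pi)) * (Real.exp t * y) := by field_simp
      linarith
  have h5 : H1 ≤ f / (4 * Real.pi) * y := by
    rw [div_mul_eq_mul_div, le_div_iff₀ (by positivity)]; linarith
  have h6 : Real.exp t * H1 ≤ f / (4 * Real.pi) * (Real.exp t * y) := by
    have := mul_le_mul_of_nonneg_left h5 e0.le
    linarith
  have h7 : (Real.exp t - Real.exp T) * (H - H1) ≤ 0 :=
    mul_nonpos_of_nonpos_of_nonneg (by linarith) (by linarith)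
  have h8 : (Real.exp δ - 1) * y * (Real.exp t - Real.exp T) ≤ 0 :=
    mul_nonpos_of_nonneg_of_nonpos (mul_nonneg (by linarith) hy) (by linarith)
  nlinarith


lemma lvl_delta (W : ℂ → ℝ) (hW : ContDiff ℝ 2 W) (hK : IsCompact {z | 0 ≤ W z})
    (g : ℂ → ℂ) (hg : Differentiable ℂ g) (a b : ℝ) (ha : 0 < a) (hb : 0 < b)
    (hl : ∀ z, 0 ≤ W z → a * (Real.exp (W z) * ‖deriv g z‖ ^ 2) ≤ -(lapC W z))
    (hu : ∀ z, 0 ≤ W z → -(lapC W z) ≤ b * (Real.exp (W z) * ‖deriv g z‖ ^ 2))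
    (T : ℝ) (hT0 : 0 ≤ T) (hT : ∀ z, W z ≤ T) (δ : ℝ) (hδ : 0 < δ) :
    Psi a b (∫ z in {z | 0 ≤ W z}, eta (W z / δ) * (-(lapC W z)))
      ≤ (∫ z in {z | 0 < W z}, ‖deriv g z‖ ^ 2)
        + Real.exp T * (δ + (Real.exp δ - 1)) * ∫ z in {z | 0 < W z}, ‖deriv g z‖ ^ 2 := by
  have hgdc : Continuous (deriv g) := (hg.contDiff (n := 1)).continuous_deriv le_rfl
  have hWc := hW.continuous
  have hed := eta_dcont
  have hec := eta_cont
  have hlc := cont_lap hW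
  set K : Set ℂ := {z | 0 ≤ W z} with hKdef
  have hKm : MeasurableSet K := hK.measurableSet
  set wt : ℂ → ℝ := fun z => ‖deriv g z‖ ^ 2 with hwt
  have hwtc : Continuous wt := by fun_prop
  have hwt0 : ∀ z, 0 ≤ wt z := fun z => by positivity
  set ρ : ℂ → ℝ := fun z => -(lapC W z) with hρ
  have hρc : Continuous ρ := hlc.neg
  have hρ0 : ∀ z, 0 ≤ W z → 0 ≤ ρ z := fun z hz => le_trans (by positivity) (hl z hz)
  have int : ∀ G : ℂ → ℝ, Continuous G → IntegrableOn G K := fun G hG =>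
    hG.continuousOn.integrableOn_compact hK
  set f : ℝ → ℝ := fun t => ∫ z in K, eta ((W z - t) / δ) * ρ z with hf
  set H : ℝ → ℝ := fun t => ∫ z in K, eta ((W z - t) / δ) * wt z with hH
  set y : ℝ → ℝ := fun t => ∫ z in K, deriv eta ((W z - t) / δ) / δ * wt z with hy
  set fp : ℝ → ℝ := fun t => ∫ z in K, deriv eta ((W z - t) / δ) / δ * ρ z with hfp
  have df : ∀ t, HasDerivAt f (-fp t) t := lvl_deriv W hWc K hK ρ hρc δ hδ
  have dH : ∀ t, HasDerivAt H (-y t) t := lvl_deriv W hWc K hK wt hwtc δ hδ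
  have Hcont : Continuous H := continuous_iff_continuousAt.2 fun t => (dH t).continuousAt
  have mono : ∀ F G : ℂ → ℝ, Continuous F → Continuous G → (∀ z ∈ K, F z ≤ G z) →
      ∫ z in K, F z ≤ ∫ z in K, G z := fun F G hF hG h =>
    setIntegral_mono_on (int F hF) (int G hG) hKm h
  have nonneg : ∀ F : ℂ → ℝ, (∀ z ∈ K, 0 ≤ F z) → 0 ≤ ∫ z in K, F z := fun F h =>
    setIntegral_nonneg hKm h
  have full : ∀ F : ℂ → ℝ, (∀ z, z ∉ K → F z = 0) → ∫ z in K, F z = ∫ z, F z := fun F h =>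
    setIntegral_eq_integral_of_forall_compl_eq_zero h
  have offK : ∀ t, 0 ≤ t → ∀ z, z ∉ K → (W z - t) / δ < 0 := by
    intro t ht z hz
    have : W z < 0 := not_le.1 hz
    exact div_neg_of_neg_of_pos (by linarith) hδ
  have f0 : ∀ t, 0 ≤ f t := fun t => nonneg _ fun z hz => mul_nonneg (eta_nonneg _) (hρ0 z hz)
  have y0 : ∀ t, 0 ≤ y t := fun t => nonneg _ fun z hz =>
    mul_nonneg (div_nonneg (eta_d_nonneg _) hδ.le) (hwt0 z)
  have hsob : ∀ t, 0 ≤ t → 4 * Real.pi * H (t + δ) ≤ f t * y t := by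
    intro t ht
    have h1 := lvl_sob W hW hK g hg δ hδ t ht
    have e1 : f t = ∫ z, eta ((W z - t) / δ) * (-(lapC W z)) :=
      full _ fun z hz => by rw [eta_zero (offK t ht z hz).le, zero_mul]
    have e2 : y t = ∫ z, deriv eta ((W z - t) / δ) / δ * ‖deriv g z‖ ^ 2 :=
      full _ fun z hz => by rw [eta_d_zero (offK t ht z hz)]; simp
    have e3 : ∫ z in K, eta ((W z - t) / δ) ^ 2 * ‖deriv g z‖ ^ 2
        = ∫ z, eta ((W z - t) / δ) ^ 2 * ‖deriv g z‖ ^ 2 :=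
      full _ fun z hz => by rw [eta_zero (offK t ht z hz).le]; simp
    rw [← e1, ← e2, ← e3] at h1
    refine le_trans ?_ h1
    apply mul_le_mul_of_nonneg_left _ (by positivity)
    apply mono _ _ (by fun_prop) (by fun_prop)
    intro z hz
    apply mul_le_mul_of_nonneg_right _ (hwt0 z)
    by_cases h : W z ≤ t + δ
    · rw [eta_zero (div_nonpos_of_nonpos_of_nonneg (by linarith) hδ.le)]; positivity
    · push Not at h
      rw [eta_one (x := (W z - t) / δ) ((one_le_div hδ).2 (by linarith))]
      simpa using eta_le _
  have Hanti : ∀ t, H (t + δ) ≤ H t := by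
    intro t
    apply mono _ _ (by fun_prop) (by fun_prop)
    intro z hz
    apply mul_le_mul_of_nonneg_right _ (hwt0 z)
    apply Real.smoothTransition.monotone
    gcongr; linarith
  have supp : ∀ t z, deriv eta ((W z - t) / δ) ≠ 0 → t ≤ W z ∧ W z ≤ t + δ := by
    intro t z h
    constructor
    · by_contra h1
      exact h (eta_d_zero (div_neg_of_neg_of_pos (by linarith) hδ))
    · by_contra h1
      exact h (eta_d_one ((one_lt_div hδ).2 (by linarith)))
  have hlow : ∀ t, a * Real.exp t * y t ≤ fp t := by
    intro t
    simp only [hy, hfp]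
    rw [← integral_const_mul]
    apply mono _ _ (by fun_prop) (by fun_prop)
    intro z hz
    by_cases h : deriv eta ((W z - t) / δ) = 0
    · simp [h]
    · have h2 := supp t z h
      have h3 : a * Real.exp t * wt z ≤ ρ z := by
        refine le_trans ?_ (hl z hz)
        have := Real.exp_le_exp.2 h2.1
        have h5 := hwt0 z
        calc a * Real.exp t * wt z ≤ a * Real.exp (W z) * wt z := by gcongr
          _ = _ := by ring
      have := mul_le_mul_of_nonneg_left h3
        (div_nonneg (eta_d_nonneg ((W z - t) / δ)) hδ.le)
      linarith
  have hupp : ∀ t, fp t ≤ b * Real.exp (t + δ) * y t := by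
    intro t
    simp only [hy, hfp]
    rw [← integral_const_mul]
    apply mono _ _ (by fun_prop) (by fun_prop)
    intro z hz
    by_cases h : deriv eta ((W z - t) / δ) = 0
    · simp [h]
    · have h2 := supp t z h
      have h3 : ρ z ≤ b * Real.exp (t + δ) * wt z := by
        refine le_trans (hu z hz) ?_
        have := Real.exp_le_exp.2 h2.2
        have h5 := hwt0 z
        calc _ = b * Real.exp (W z) * wt z := by ring
          _ ≤ b * Real.exp (t + δ) * wt z := by gcongr
      have := mul_le_mul_of_nonneg_left h3
        (div_nonneg (eta_d_nonneg ((W z - t) / δ)) hδ.le)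
      linarith
  set Φ : ℝ → ℝ := fun t => Real.exp t * H t - Psi a b (f t) + Real.exp T * (∫ s in t..(t + δ), H s)
    + (Real.exp δ - 1) * Real.exp T * H t with hΦ
  have dI : ∀ t, HasDerivAt (fun t => ∫ s in t..(t + δ), H s) (H (t + δ) - H t) t := by
    intro t
    have hi : ∀ u v, IntervalIntegrable H volume u v := fun u v => Hcont.intervalIntegrable u v
    have e : (fun t => ∫ s in t..(t + δ), H s) = fun t => (∫ s in (0:ℝ)..(t + δ), H s) - ∫ s in (0:ℝ)..t, H s := by
      ext t
      rw [intervalIntegral.integral_interval_sub_left (hi _ _) (hi _ _)]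
    rw [e]
    have h1 : HasDerivAt (fun u => ∫ s in (0:ℝ)..u, H s) (H (t + δ)) (t + δ) :=
      Hcont.integral_hasStrictDerivAt 0 (t + δ) |>.hasDerivAt
    have h2 : HasDerivAt (fun u => ∫ s in (0:ℝ)..u, H s) (H t) t :=
      Hcont.integral_hasStrictDerivAt 0 t |>.hasDerivAt
    have h3 := h1.comp_add_const t δ
    exact h3.sub h2
  have dΦ : ∀ t, HasDerivAt Φ ((Real.exp t * H t + Real.exp t * (-y t)) - Psi' a b (f t) * (-fp t)
      + Real.exp T * (H (t + δ) - H t) + (Real.exp δ - 1) * Real.exp T * (-y t)) t := by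
    intro t
    exact ((((Real.hasDerivAt_exp t).mul (dH t)).sub ((Psi_has a b (f t)).comp t (df t))).add
      ((dI t).const_mul _)).add ((dH t).const_mul _)
  have anti : AntitoneOn Φ (Set.Icc 0 T) := by
    apply antitoneOn_of_deriv_nonpos (convex_Icc 0 T)
    · exact (continuous_iff_continuousAt.2 fun t => (dΦ t).continuousAt).continuousOn
    · exact fun t _ => (dΦ t).differentiableAt.differentiableWithinAt
    · intro t ht
      rw [interior_Icc] at ht
      rw [(dΦ t).deriv]
      have := core_alg a b (f t) (y t) (fp t) (H t) (H (t + δ)) t δ T ha hb (f0 t) (y0 t) hδ ht.2.le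
        (hsob t ht.1.le) (Hanti t) (hlow t) (hupp t)
      linarith
  have zero_of : ∀ t, T ≤ t → ∀ z, eta ((W z - t) / δ) = 0 := fun t ht z =>
    eta_zero (div_nonpos_of_nonpos_of_nonneg (by linarith [hT z]) hδ.le)
  have HT : ∀ t, T ≤ t → H t = 0 := by
    intro t ht
    simp only [hH, zero_of t ht, zero_mul, integral_zero]
  have fT : f T = 0 := by simp only [hf, zero_of T le_rfl, zero_mul, integral_zero]
  have IT : ∫ s in T..(T + δ), H s = 0 := by
    rw [intervalIntegral.integral_congr (g := fun _ => (0:ℝ))]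
    · simp
    · intro s hs
      rw [Set.uIcc_of_le (by linarith)] at hs
      exact HT s hs.1
  have ΦT : Φ T = 0 := by simp [hΦ, HT T le_rfl, fT, IT, Psi_zero]
  have h0 := anti (Set.left_mem_Icc.2 hT0) (Set.right_mem_Icc.2 hT0) hT0
  rw [ΦT] at h0
  simp only [hΦ, zero_add, Real.exp_zero, one_mul] at h0
  set Λ := ∫ z in {z | 0 < W z}, wt z with hΛ
  have posm : MeasurableSet {z | 0 < W z} := measurableSet_lt measurable_const hWc.measurable
  have sub : {z | 0 < W z} ⊆ K := fun z (hz : 0 < W z) => show 0 ≤ W z from hz.le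
  have HΛ : ∀ t, 0 ≤ t → H t ≤ Λ := by
    intro t ht
    have e : Λ = ∫ z in K, ({z | 0 < W z}.indicator wt) z := by
      rw [setIntegral_indicator posm, Set.inter_eq_right.2 sub]
    rw [e]
    apply setIntegral_mono_on (int _ (by fun_prop)) ((int _ hwtc).indicator posm) hKm
    intro z hz
    by_cases h : 0 < W z
    · rw [Set.indicator_of_mem (by exact h)]
      exact mul_le_of_le_one_left (hwt0 z) (eta_le _)
    · rw [Set.indicator_of_notMem (by exact h),
        eta_zero (div_nonpos_of_nonpos_of_nonneg (by linarith) hδ.le), zero_mul]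
  have IΛ : ∫ s in (0:ℝ)..δ, H s ≤ δ * Λ := by
    have := intervalIntegral.integral_mono_on (a := 0) (b := δ) (μ := volume) hδ.le
      (Hcont.intervalIntegrable 0 δ) (continuous_const.intervalIntegrable (μ := volume) 0 δ)
      (g := fun _ => Λ) (fun s hs => HΛ s hs.1)
    simpa using this
  have ef : f 0 = ∫ z in K, eta (W z / δ) * (-(lapC W z)) := by
    simp only [hf, sub_zero]; rfl
  rw [← ef]
  have ed : 1 ≤ Real.exp δ := by rw [← Real.exp_zero]; exact Real.exp_le_exp.2 hδ.le
  have eT := Real.exp_pos T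
  have q1 := HΛ 0 le_rfl
  have q2 := mul_le_mul_of_nonneg_left IΛ eT.le
  have q3 : (Real.exp δ - 1) * Real.exp T * H 0 ≤ (Real.exp δ - 1) * Real.exp T * Λ :=
    mul_le_mul_of_nonneg_left q1 (mul_nonneg (by linarith) eT.le)
  nlinarith

lemma lvl_main (W : ℂ → ℝ) (hW : ContDiff ℝ 2 W) (hK : IsCompact {z | 0 ≤ W z})
    (g : ℂ → ℂ) (hg : Differentiable ℂ g) (a b : ℝ) (ha : 0 < a) (hb : 0 < b)
    (hl : ∀ z, 0 ≤ W z → a * (Real.exp (W z) * ‖deriv g z‖ ^ 2) ≤ -(lapC W z))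
    (hu : ∀ z, 0 ≤ W z → -(lapC W z) ≤ b * (Real.exp (W z) * ‖deriv g z‖ ^ 2)) :
    Psi a b (∫ z in {z | 0 < W z}, -(lapC W z)) ≤ ∫ z in {z | 0 < W z}, ‖deriv g z‖ ^ 2 := by
  have hWc := hW.continuous
  have hec := eta_cont
  have hlc := cont_lap hW
  obtain ⟨T, hT0, hT⟩ : ∃ T : ℝ, 0 ≤ T ∧ ∀ z, W z ≤ T := by
    obtain ⟨C, hC⟩ := hK.exists_bound_of_continuousOn hWc.continuousOn
    refine ⟨max C 0, le_max_right _ _, fun z => ?_⟩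
    by_cases h : 0 ≤ W z
    · exact ((le_abs_self _).trans (hC z h)).trans (le_max_left _ _)
    · exact (not_le.1 h).le.trans (le_max_right _ _)
  set Λ := ∫ z in {z | 0 < W z}, ‖deriv g z‖ ^ 2 with hΛ
  set d : ℕ → ℝ := fun n => 1 / ((n : ℝ) + 1) with hd
  have hd0 : ∀ n, 0 < d n := fun n => by positivity
  have hdt : Tendsto d atTop (nhds 0) := tendsto_one_div_add_atTop_nhds_zero_nat
  have key := fun n => lvl_delta W hW hK g hg a b ha hb hl hu T hT0 hT (d n) (hd0 n)
  have posm : MeasurableSet {z | 0 < W z} := measurableSet_lt measurable_const hWc.measurable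
  have sub : {z | 0 < W z} ⊆ {z | 0 ≤ W z} := fun z (hz : 0 < W z) => show 0 ≤ W z from hz.le
  have lim1 : Tendsto (fun n => ∫ z in {z | 0 ≤ W z}, eta (W z / d n) * (-(lapC W z))) atTop
      (nhds (∫ z in {z | 0 < W z}, -(lapC W z))) := by
    have e : ∫ z in {z | 0 < W z}, -(lapC W z)
        = ∫ z in {z | 0 ≤ W z}, ({z | 0 < W z}.indicator (fun z => -(lapC W z))) z := by
      rw [setIntegral_indicator posm, Set.inter_eq_right.2 sub]
    rw [e]
    apply tendsto_integral_of_dominated_convergence (fun z => ‖lapC W z‖)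
    · intro n; apply Continuous.aestronglyMeasurable; fun_prop
    · exact hlc.norm.continuousOn.integrableOn_compact hK
    · intro n; refine Eventually.of_forall fun z => ?_
      rw [norm_mul, norm_neg, Real.norm_eq_abs, abs_of_nonneg (eta_nonneg _)]
      exact mul_le_of_le_one_left (norm_nonneg _) (eta_le _)
    · refine Eventually.of_forall fun z => ?_
      by_cases h : 0 < W z
      · rw [Set.indicator_of_mem (by exact h)]
        apply tendsto_const_nhds.congr'
        have : ∀ᶠ n in atTop, d n < W z := hdt.eventually (Iio_mem_nhds h)
        filter_upwards [this] with n hn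
        rw [eta_one ((one_le_div (hd0 n)).2 hn.le), one_mul]
      · rw [Set.indicator_of_notMem (by exact h)]
        apply tendsto_const_nhds.congr
        intro n
        rw [eta_zero (div_nonpos_of_nonpos_of_nonneg (by linarith) (hd0 n).le), zero_mul]
  have lim2 := ((Psi_cont a b).tendsto _).comp lim1
  have lim3 : Tendsto (fun n => Λ + Real.exp T * (d n + (Real.exp (d n) - 1)) * Λ) atTop
      (nhds (Λ + Real.exp T * (0 + (Real.exp 0 - 1)) * Λ)) := by
    have he : Tendsto (fun n => Real.exp (d n)) atTop (nhds (Real.exp 0)) :=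
      (Real.continuous_exp.tendsto 0).comp hdt
    exact (((hdt.add (he.sub_const 1)).const_mul _).mul_const _).const_add _
  have := le_of_tendsto_of_tendsto' lim2 lim3 key
  simpa using this


/-- polar coordinates -/
noncomputable def ce (θ : ℝ) : ℂ := (Real.cos θ : ℂ) + (Real.sin θ : ℂ) * Complex.I
noncomputable def cz (r θ : ℝ) : ℂ := (r : ℂ) * ce θ

lemma ce_cont : Continuous ce := by unfold ce; fun_prop
lemma cz_cont : Continuous (fun p : ℝ × ℝ => cz p.1 p.2) := by
  have := ce_cont; unfold cz; fun_prop
lemma cz_cont2 (r : ℝ) : Continuous (fun θ => cz r θ) := by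
  have := ce_cont; unfold cz; fun_prop
lemma norm_ce (θ : ℝ) : ‖ce θ‖ = 1 := by
  have : ‖ce θ‖ ^ 2 = 1 := by
    rw [← Complex.normSq_eq_norm_sq, Complex.normSq_apply]
    simp only [ce, Complex.add_re, Complex.add_im, Complex.mul_re, Complex.mul_im, Complex.ofReal_re,
      Complex.ofReal_im, Complex.I_re, Complex.I_im]
    have := Real.sin_sq_add_cos_sq θ
    nlinarith
  have h := norm_nonneg (ce θ)
  nlinarith
lemma norm_cz (r θ : ℝ) : ‖cz r θ‖ = |r| := by
  simp [cz, norm_ce]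

lemma fderiv_lin (f : ℂ → ℝ) (z : ℂ) (x y : ℝ) :
    fderiv ℝ f z ((x : ℂ) + (y : ℂ) * Complex.I) = x * dX f z + y * dY f z := by
  have : (x : ℂ) + (y : ℂ) * Complex.I = x • (1 : ℂ) + y • Complex.I := by simp
  rw [this, map_add, map_smul, map_smul]; simp [dX, dY]

lemma d_r (f : ℂ → ℝ) (hf : ContDiff ℝ 1 f) (r θ : ℝ) :
    HasDerivAt (fun r => f (cz r θ)) (Real.cos θ * dX f (cz r θ) + Real.sin θ * dY f (cz r θ)) r := by
  have h1 : HasDerivAt (fun r : ℝ => cz r θ) (ce θ) r := by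
    have := (Complex.ofRealCLM.hasDerivAt (x := r)).mul_const (ce θ)
    simpa [cz] using this
  have h2 := ((hf.differentiable one_ne_zero (cz r θ)).hasFDerivAt).comp_hasDerivAt r h1
  refine HasDerivAt.congr_deriv (f := fun r => f (cz r θ)) h2 ?_
  rw [ce, fderiv_lin]

lemma d_th (f : ℂ → ℝ) (hf : ContDiff ℝ 1 f) (r θ : ℝ) :
    HasDerivAt (fun θ => f (cz r θ)) (r * (-Real.sin θ * dX f (cz r θ) + Real.cos θ * dY f (cz r θ))) θ := by
  have hc : HasDerivAt (fun θ : ℝ => (Real.cos θ : ℂ)) ((-Real.sin θ : ℝ) : ℂ) θ :=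
    (Real.hasDerivAt_cos θ).ofReal_comp
  have hs : HasDerivAt (fun θ : ℝ => (Real.sin θ : ℂ)) ((Real.cos θ : ℝ) : ℂ) θ :=
    (Real.hasDerivAt_sin θ).ofReal_comp
  have h1 : HasDerivAt (fun θ : ℝ => cz r θ)
      ((r : ℂ) * (((-Real.sin θ : ℝ) : ℂ) + ((Real.cos θ : ℝ) : ℂ) * Complex.I)) θ :=
    (hc.add (hs.mul_const _)).const_mul _
  have h2 := ((hf.differentiable one_ne_zero (cz r θ)).hasFDerivAt).comp_hasDerivAt θ h1
  refine HasDerivAt.congr_deriv (f := fun θ => f (cz r θ)) h2 ?_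
  rw [← Complex.real_smul, map_smul, fderiv_lin, smul_eq_mul]

lemma param_deriv (F F' : ℝ → ℝ → ℝ) (hF : Continuous (fun p : ℝ × ℝ => F p.1 p.2))
    (hF' : Continuous (fun p : ℝ × ℝ => F' p.1 p.2))
    (hd : ∀ r θ, HasDerivAt (fun r => F r θ) (F' r θ) r) (u v r : ℝ) :
    HasDerivAt (fun r => ∫ θ in u..v, F r θ) (∫ θ in u..v, F' r θ) r := by
  have c1 : ∀ s, Continuous (F s) := fun s => hF.comp (Continuous.prodMk_right s)
  have c2 : ∀ s, Continuous (F' s) := fun s => hF'.comp (Continuous.prodMk_right s)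
  obtain ⟨C, hC⟩ := ((isCompact_Icc (a := r - 1) (b := r + 1)).prod
    (isCompact_uIcc (a := u) (b := v))).exists_bound_of_continuousOn hF'.continuousOn
  refine (intervalIntegral.hasDerivAt_integral_of_dominated_loc_of_deriv_le
    (bound := fun _ => C) (s := Set.Icc (r - 1) (r + 1)) (Icc_mem_nhds (by linarith) (by linarith))
    (Eventually.of_forall fun s => (c1 s).aestronglyMeasurable) ((c1 r).intervalIntegrable _ _)
    (c2 r).aestronglyMeasurable ?_ (continuous_const.intervalIntegrable _ _)
    (Eventually.of_forall fun θ _ s _ => hd s θ)).2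
  exact Eventually.of_forall fun θ hθ s hs => hC (s, θ) ⟨hs, Set.uIoc_subset_uIcc hθ⟩

/-- circle integral -/
noncomputable def cI (f : ℂ → ℝ) (r : ℝ) : ℝ := ∫ θ in (-Real.pi)..Real.pi, f (cz r θ)

/-- the flux -/
noncomputable def flux (U : ℂ → ℝ) (r : ℝ) : ℝ :=
  -(r * ∫ θ in (-Real.pi)..Real.pi,
    (Real.cos θ * dX U (cz r θ) + Real.sin θ * dY U (cz r θ)))

lemma cI_has (U : ℂ → ℝ) (hU : ContDiff ℝ 1 U) (r : ℝ) :
    HasDerivAt (cI U) (∫ θ in (-Real.pi)..Real.pi,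
    (Real.cos θ * dX U (cz r θ) + Real.sin θ * dY U (cz r θ))) r := by
  have h1 := hU.continuous
  have h2 := cont_dX hU
  have h3 := cont_dY hU
  have h4 := cz_cont
  exact param_deriv (fun r θ => U (cz r θ)) (fun r θ => Real.cos θ * dX U (cz r θ) + Real.sin θ * dY U (cz r θ))
    (by fun_prop) (by fun_prop) (fun r θ => d_r U hU r θ) _ _ r

lemma cI_has' (U : ℂ → ℝ) (hU : ContDiff ℝ 1 U) (r : ℝ) (hr : r ≠ 0) :
    HasDerivAt (cI U) (-(flux U r / r)) r := by
  refine HasDerivAt.congr_deriv (f := cI U) (cI_has U hU r) ?_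
  unfold flux; field_simp

lemma cI_cont {f : ℂ → ℝ} (hf : Continuous f) : Continuous (cI f) := by
  have h4 := cz_cont
  exact intervalIntegral.continuous_parametric_intervalIntegral_of_continuous'
    (f := fun r θ => f (cz r θ)) (by fun_prop) _ _

lemma flux_has (U : ℂ → ℝ) (hU : ContDiff ℝ 2 U) (r : ℝ) :
    HasDerivAt (flux U) (r * cI (fun z => -(lapC U z)) r) r := by
  have hU1 : ContDiff ℝ 1 U := hU.of_le (by norm_num)
  have hx := contDiff_dX1 hU
  have hy := contDiff_dY1 hU
  have c1 := cont_dX hU1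
  have c2 := cont_dY hU1
  have c3 := cont_dX hx
  have c4 := cont_dY hx
  have c5 := cont_dX hy
  have c6 := cont_dY hy
  have c0 := cz_cont
  have cz2 := cz_cont2 r
  have hl := cont_lap hU
  have hpd := param_deriv (fun r θ => Real.cos θ * dX U (cz r θ) + Real.sin θ * dY U (cz r θ))
    (fun r θ => Real.cos θ * (Real.cos θ * dX (dX U) (cz r θ) + Real.sin θ * dY (dX U) (cz r θ))
      + Real.sin θ * (Real.cos θ * dX (dY U) (cz r θ) + Real.sin θ * dY (dY U) (cz r θ)))
    (by fun_prop) (by fun_prop)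
    (fun r θ => ((d_r _ hx r θ).const_mul _).add ((d_r _ hy r θ).const_mul _))
    (-Real.pi) Real.pi r
  have h1 := ((hasDerivAt_id r).mul hpd).neg
  refine HasDerivAt.congr_deriv (f := flux U) h1 ?_
  -- tangential derivative integrates to zero
  have hQ : ∀ θ, HasDerivAt (fun θ => -Real.sin θ * dX U (cz r θ) + Real.cos θ * dY U (cz r θ))
      (-Real.cos θ * dX U (cz r θ) + -Real.sin θ * (r * (-Real.sin θ * dX (dX U) (cz r θ) + Real.cos θ * dY (dX U) (cz r θ)))
      + (-Real.sin θ * dY U (cz r θ) + Real.cos θ * (r * (-Real.sin θ * dX (dY U) (cz r θ) + Real.cos θ * dY (dY U) (cz r θ))))) θ :=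
    fun θ => (((Real.hasDerivAt_sin θ).neg).mul (d_th _ hx r θ)).add ((Real.hasDerivAt_cos θ).mul (d_th _ hy r θ))
  have hQ0 := intervalIntegral.integral_eq_sub_of_hasDerivAt (a := -Real.pi) (b := Real.pi)
    (fun θ _ => hQ θ) (Continuous.intervalIntegrable (by fun_prop) _ _)
  have ep : cz r Real.pi = cz r (-Real.pi) := by simp [cz, ce]
  rw [ep] at hQ0
  simp only [Real.sin_neg, Real.cos_neg, Real.sin_pi, Real.cos_pi, neg_zero, sub_self] at hQ0
  simp only [id, one_mul]
  unfold cI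
  rw [← intervalIntegral.integral_const_mul, ← intervalIntegral.integral_const_mul,
    ← intervalIntegral.integral_add (Continuous.intervalIntegrable (by fun_prop) _ _)
      (Continuous.intervalIntegrable (by fun_prop) _ _), ← intervalIntegral.integral_neg,
    ← sub_eq_zero, ← intervalIntegral.integral_sub (Continuous.intervalIntegrable (by fun_prop) _ _)
      (Continuous.intervalIntegrable (by fun_prop) _ _), ← hQ0]
  apply intervalIntegral.integral_congr
  intro θ _
  simp only [lapC]
  have := Real.sin_sq_add_cos_sq θ
  have e : Real.cos θ ^ 2 = 1 - Real.sin θ ^ 2 := by linarith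
  ring_nf
  rw [e]; ring

lemma flux_zero (U : ℂ → ℝ) : flux U 0 = 0 := by simp [flux]

lemma flux_cont (U : ℂ → ℝ) (hU : ContDiff ℝ 2 U) : Continuous (flux U) :=
  continuous_iff_continuousAt.2 fun r => (flux_has U hU r).continuousAt

lemma polar_ball (f : ℂ → ℝ) (hf : Continuous f) (r : ℝ) (hr : 0 ≤ r) :
    ∫ z in ball (0:ℂ) r, f z = ∫ s in (0:ℝ)..r, s * cI f s := by
  have hpi := Real.pi_pos
  have c0 := cz_cont
  rw [← integral_indicator measurableSet_ball, ← Complex.integral_comp_polarCoord_symm,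
    polarCoord_target]
  have e1 : ∀ p : ℝ × ℝ, Complex.polarCoord.symm p = cz p.1 p.2 := by
    intro p; rw [Complex.polarCoord_symm_apply]; simp [cz, ce]
  simp only [e1]
  have e2 : Set.EqOn (fun p : ℝ × ℝ => p.1 • (ball (0:ℂ) r).indicator f (cz p.1 p.2))
      ((Set.Iio r ×ˢ (Set.univ : Set ℝ)).indicator (fun p : ℝ × ℝ => p.1 * f (cz p.1 p.2)))
      (Set.Ioi (0:ℝ) ×ˢ Set.Ioo (-Real.pi) Real.pi) := by
    intro p hp
    have hp0 : 0 < p.1 := hp.1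
    have hn : ‖cz p.1 p.2‖ = p.1 := by rw [norm_cz, abs_of_pos hp0]
    simp only [smul_eq_mul]
    by_cases h : p.1 < r
    · rw [Set.indicator_of_mem (by rw [mem_ball_zero_iff, hn]; exact h),
        Set.indicator_of_mem (by exact ⟨h, trivial⟩)]
    · rw [Set.indicator_of_notMem (by rw [mem_ball_zero_iff, hn]; exact h),
        Set.indicator_of_notMem (by exact fun h' => h h'.1)]
      simp
  rw [setIntegral_congr_fun (measurableSet_Ioi.prod measurableSet_Ioo) e2,
    setIntegral_indicator (measurableSet_Iio.prod MeasurableSet.univ), Set.prod_inter_prod,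
    Set.inter_univ, Set.Ioi_inter_Iio, Measure.volume_eq_prod, setIntegral_prod]
  · rw [intervalIntegral.integral_of_le hr, integral_Ioc_eq_integral_Ioo]
    apply setIntegral_congr_fun measurableSet_Ioo
    intro s hs
    simp only [cI]
    rw [intervalIntegral.integral_of_le (by linarith), integral_Ioc_eq_integral_Ioo,
      ← integral_const_mul]
  · have : IntegrableOn (fun p : ℝ × ℝ => p.1 * f (cz p.1 p.2))
        (Set.Icc 0 r ×ˢ Set.Icc (-Real.pi) Real.pi) :=
      ContinuousOn.integrableOn_compact (isCompact_Icc.prod isCompact_Icc)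
        (Continuous.continuousOn (by fun_prop))
    exact this.mono_set (Set.prod_mono Set.Ioo_subset_Icc_self Set.Ioo_subset_Icc_self)

lemma flux_eq (U : ℂ → ℝ) (hU : ContDiff ℝ 2 U) (r : ℝ) (hr : 0 ≤ r) :
    flux U r = ∫ z in ball (0:ℂ) r, -(lapC U z) := by
  have hl := cont_lap hU
  have hc := cI_cont hl.neg
  rw [polar_ball (fun z => -(lapC U z)) hl.neg r hr]
  have := intervalIntegral.integral_eq_sub_of_hasDerivAt (a := 0) (b := r)
    (fun s _ => flux_has U hU s) (Continuous.intervalIntegrable (by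
      change Continuous fun s => s * cI (-lapC U) s
      fun_prop) _ _)
  rw [flux_zero, sub_zero] at this
  rw [this]

lemma sub_mean (v : ℂ → ℝ) (hv : ContDiff ℝ 2 v) (hs : ∀ z, 0 ≤ lapC v z) (r : ℝ) (hr : 0 ≤ r) :
    ∫ z in ball (0:ℂ) r, v z ≤ r ^ 2 / 2 * cI v r := by
  have hv1 : ContDiff ℝ 1 v := hv.of_le (by norm_num)
  have hpi := Real.pi_pos
  have hflux : ∀ s, 0 ≤ s → flux v s ≤ 0 := by
    intro s h
    rw [flux_eq v hv s h]
    apply integral_nonpos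
    intro z; simpa using hs z
  have mono : MonotoneOn (cI v) (Set.Ici 0) := by
    apply monotoneOn_of_deriv_nonneg (convex_Ici 0) (cI_cont hv.continuous).continuousOn
    · exact fun s _ => (cI_has v hv1 s).differentiableAt.differentiableWithinAt
    · intro s h
      rw [interior_Ici] at h
      have h' : 0 < s := h
      rw [(cI_has' v hv1 s h'.ne').deriv]
      have := div_nonpos_of_nonpos_of_nonneg (hflux s h'.le) h'.le
      linarith
  have hc := cI_cont hv.continuous
  rw [polar_ball v hv.continuous r hr]
  have := intervalIntegral.integral_mono_on (a := 0) (b := r) (μ := volume) hr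
    (f := fun s => s * cI v s) (g := fun s => s * cI v r)
    (Continuous.intervalIntegrable (by fun_prop) _ _) (Continuous.intervalIntegrable (by fun_prop) _ _)
    (fun s h => mul_le_mul_of_nonneg_left (mono h.1 hr h.2) h.1)
  rw [intervalIntegral.integral_mul_const, integral_id] at this
  simpa using this


lemma ce_exp (θ : ℝ) : ce θ = Complex.exp (θ * Complex.I) := by
  rw [Complex.exp_mul_I, ce, Complex.ofReal_cos, Complex.ofReal_sin]

lemma ce_periodic : Function.Periodic ce (2 * Real.pi) := by
  intro θ
  simp [ce, Real.cos_add_two_pi, Real.sin_add_two_pi, -Complex.ofReal_cos, -Complex.ofReal_sin]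

lemma fourier_ce (n : ℤ) (θ : ℝ) :
    (fourier n : C(AddCircle (2 * Real.pi), ℂ)) (θ : AddCircle (2 * Real.pi)) = ce θ ^ n := by
  rw [fourier_coe_apply, ce_exp, ← Complex.exp_int_mul]
  congr 1
  have : (Real.pi : ℂ) ≠ 0 := by exact_mod_cast Real.pi_ne_zero
  push_cast
  field_simp

lemma circle_approx (U : ℂ → ℝ) (hU : Continuous U) (r : ℝ) (hr : 0 < r) (ε : ℝ) (hε : 0 < ε) :
    ∃ P : ℂ → ℂ, Differentiable ℂ P ∧
      ∀ θ, U (cz r θ) < (P (cz r θ)).re ∧ (P (cz r θ)).re < U (cz r θ) + ε := by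
  haveI : Fact (0 < 2 * Real.pi) := ⟨by positivity⟩
  have hrc : (r : ℂ) ≠ 0 := by exact_mod_cast hr.ne'
  have hper : Function.Periodic (fun θ => ((U (cz r θ) + ε / 2 : ℝ) : ℂ)) (2 * Real.pi) := by
    intro θ
    simp only [cz, ce_periodic θ]
  have hc : Continuous (fun θ => ((U (cz r θ) + ε / 2 : ℝ) : ℂ)) := by
    have := cz_cont2 r
    fun_prop
  let F : C(AddCircle (2 * Real.pi), ℂ) := ⟨hper.lift, hc.quotient_lift _⟩
  have hF : F ∈ (Submodule.span ℂ (Set.range (@fourier (2 * Real.pi)))).topologicalClosure := by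
    rw [span_fourier_closure_eq_top]; trivial
  rw [← SetLike.mem_coe, Submodule.topologicalClosure_coe, Metric.mem_closure_iff] at hF
  obtain ⟨f, hf, hd⟩ := hF (ε / 2) (by positivity)
  have key : ∃ P Q : ℂ → ℂ, Differentiable ℂ P ∧ Differentiable ℂ Q ∧
      ∀ θ : ℝ, f (θ : AddCircle (2 * Real.pi)) = P (cz r θ) + (starRingEnd ℂ) (Q (cz r θ)) := by
    have hf' : f ∈ Submodule.span ℂ (Set.range (@fourier (2 * Real.pi))) := hf
    clear hf hd
    induction hf' using Submodule.span_induction with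
    | mem x hx =>
      obtain ⟨n, rfl⟩ := hx
      obtain ⟨m, rfl | rfl⟩ := n.eq_nat_or_neg
      · refine ⟨fun z => (z / r) ^ m, fun _ => 0, by fun_prop, by fun_prop, fun θ => ?_⟩
        rw [fourier_ce, cz]
        field_simp
        simp
      · refine ⟨fun _ => 0, fun z => (z / r) ^ m, by fun_prop, by fun_prop, fun θ => ?_⟩
        rw [fourier_neg, fourier_ce, cz]
        field_simp
        simp
    | zero => exact ⟨fun _ => 0, fun _ => 0, by fun_prop, by fun_prop, by simp⟩
    | add x y _ _ hx hy =>
      obtain ⟨P, Q, hP, hQ, h⟩ := hx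
      obtain ⟨P', Q', hP', hQ', h'⟩ := hy
      refine ⟨fun z => P z + P' z, fun z => Q z + Q' z, by fun_prop, by fun_prop, fun θ => ?_⟩
      rw [ContinuousMap.add_apply, h, h', map_add]; ring
    | smul c x _ hx =>
      obtain ⟨P, Q, hP, hQ, h⟩ := hx
      refine ⟨fun z => c * P z, fun z => (starRingEnd ℂ) c * Q z, by fun_prop, by fun_prop,
        fun θ => ?_⟩
      rw [ContinuousMap.smul_apply, h, map_mul, Complex.conj_conj, smul_eq_mul]; ring
  obtain ⟨P, Q, hP, hQ, h⟩ := key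
  refine ⟨fun z => P z + Q z, by fun_prop, fun θ => ?_⟩
  have h1 : dist (F (θ : AddCircle (2 * Real.pi))) (f θ) < ε / 2 :=
    lt_of_le_of_lt (ContinuousMap.dist_apply_le_dist _) hd
  have h2 : F (θ : AddCircle (2 * Real.pi)) = ((U (cz r θ) + ε / 2 : ℝ) : ℂ) :=
    hper.lift_coe θ
  rw [h2, h, dist_eq_norm] at h1
  have h3 := lt_of_le_of_lt (Complex.abs_re_le_norm _) h1
  simp only [Complex.sub_re, Complex.ofReal_re, Complex.add_re, Complex.conj_re] at h3
  rw [abs_lt] at h3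
  simp only [Complex.add_re]
  constructor <;> linarith


lemma re_hasF (P : ℂ → ℂ) (hP : Differentiable ℂ P) (z v : ℂ) :
    fderiv ℝ (fun z => (P z).re) z v = (v * deriv P z).re := by
  have h1 : HasFDerivAt P ((ContinuousLinearMap.toSpanSingleton ℂ (deriv P z)).restrictScalars ℝ) z :=
    (hP z).hasDerivAt.hasFDerivAt.restrictScalars ℝ
  have h2 : HasFDerivAt (fun z => (P z).re) _ z := Complex.reCLM.hasFDerivAt.comp z h1
  rw [h2.fderiv]
  simp

lemma re_cd (P : ℂ → ℂ) (hP : Differentiable ℂ P) : ContDiff ℝ 2 (fun z => (P z).re) :=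
  Complex.reCLM.contDiff.comp ((hP.contDiff (n := 2)).restrict_scalars ℝ)

lemma dX_re (P : ℂ → ℂ) (hP : Differentiable ℂ P) :
    dX (fun z => (P z).re) = fun z => (deriv P z).re := by
  ext z; simp [dX, re_hasF P hP]

lemma dY_re (P : ℂ → ℂ) (hP : Differentiable ℂ P) :
    dY (fun z => (P z).re) = fun z => (Complex.I * deriv P z).re := by
  ext z; rw [dY, re_hasF P hP]

lemma lap_re (P : ℂ → ℂ) (hP : Differentiable ℂ P) (z : ℂ) : lapC (fun z => (P z).re) z = 0 := by
  have hP' : Differentiable ℂ (deriv P) := by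
    have h := hP.contDiff (n := 2)
    exact (h.differentiable_deriv_two)
  have h2 : Differentiable ℂ (fun z => Complex.I * deriv P z) := by fun_prop
  rw [lapC, dX_re P hP, dY_re P hP, dX_re _ hP', dY_re _ h2]
  change (deriv (deriv P) z).re + (Complex.I * deriv (fun z => Complex.I * deriv P z) z).re = 0
  rw [deriv_const_mul _ (hP' z), ← mul_assoc]
  simp

lemma dX_exp {h : ℂ → ℝ} {z : ℂ} (hh : DifferentiableAt ℝ h z) :
    dX (fun z => Real.exp (h z)) z = Real.exp (h z) * dX h z := by
  rw [dX, hh.hasFDerivAt.exp.fderiv]; simp [dX]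

lemma dY_exp {h : ℂ → ℝ} {z : ℂ} (hh : DifferentiableAt ℝ h z) :
    dY (fun z => Real.exp (h z)) z = Real.exp (h z) * dY h z := by
  rw [dY, hh.hasFDerivAt.exp.fderiv]; simp [dY]

lemma lap_exp (h : ℂ → ℝ) (hh : ContDiff ℝ 2 h) (h0 : ∀ z, lapC h z = 0) (z : ℂ) :
    0 ≤ lapC (fun z => Real.exp (h z)) z := by
  have d := hh.differentiable two_ne_zero
  have dx := (contDiff_dX1 hh).differentiable one_ne_zero
  have dy := (contDiff_dY1 hh).differentiable one_ne_zero
  have e1 : dX (fun z => Real.exp (h z)) = fun z => Real.exp (h z) * dX h z :=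
    funext fun z => dX_exp (d z)
  have e2 : dY (fun z => Real.exp (h z)) = fun z => Real.exp (h z) * dY h z :=
    funext fun z => dY_exp (d z)
  have h0z := h0 z
  rw [lapC] at h0z ⊢
  rw [e1, e2, dX_mul (d z).exp (dx z), dY_mul (d z).exp (dy z), dX_exp (d z), dY_exp (d z)]
  have : Real.exp (h z) * dX h z * dX h z + Real.exp (h z) * dX (dX h) z +
      (Real.exp (h z) * dY h z * dY h z + Real.exp (h z) * dY (dY h) z)
      = Real.exp (h z) * (dX h z ^ 2 + dY h z ^ 2) + Real.exp (h z) * (dX (dX h) z + dY (dY h) z) := by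
    ring
  rw [this, h0z]
  positivity

lemma dX_add' {f g : ℂ → ℝ} (hf : Differentiable ℝ f) (hg : Differentiable ℝ g) :
    dX (fun z => f z + g z) = fun z => dX f z + dX g z := by
  ext z; simp only [dX]; rw [fderiv_fun_add (hf z) (hg z)]; simp

lemma dY_add' {f g : ℂ → ℝ} (hf : Differentiable ℝ f) (hg : Differentiable ℝ g) :
    dY (fun z => f z + g z) = fun z => dY f z + dY g z := by
  ext z; simp only [dY]; rw [fderiv_fun_add (hf z) (hg z)]; simp

lemma lap_add {f g : ℂ → ℝ} (hf : ContDiff ℝ 2 f) (hg : ContDiff ℝ 2 g) (z : ℂ) :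
    lapC (fun z => f z + g z) z = lapC f z + lapC g z := by
  simp only [lapC]
  rw [dX_add' (hf.differentiable two_ne_zero) (hg.differentiable two_ne_zero),
    dY_add' (hf.differentiable two_ne_zero) (hg.differentiable two_ne_zero),
    dX_add' ((contDiff_dX1 hf).differentiable one_ne_zero) ((contDiff_dX1 hg).differentiable one_ne_zero),
    dY_add' ((contDiff_dY1 hf).differentiable one_ne_zero) ((contDiff_dY1 hg).differentiable one_ne_zero)]
  ring

lemma dX_smul' {f : ℂ → ℝ} (c : ℝ) (hf : Differentiable ℝ f) :
    dX (fun z => c * f z) = fun z => c * dX f z := by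
  ext z; simp only [dX]; rw [fderiv_const_mul (hf z)]; simp

lemma dY_smul' {f : ℂ → ℝ} (c : ℝ) (hf : Differentiable ℝ f) :
    dY (fun z => c * f z) = fun z => c * dY f z := by
  ext z; simp only [dY]; rw [fderiv_const_mul (hf z)]; simp

lemma lap_smul {f : ℂ → ℝ} (c : ℝ) (hf : ContDiff ℝ 2 f) (z : ℂ) :
    lapC (fun z => c * f z) z = c * lapC f z := by
  simp only [lapC]
  rw [dX_smul' c (hf.differentiable two_ne_zero), dY_smul' c (hf.differentiable two_ne_zero),
    dX_smul' c ((contDiff_dX1 hf).differentiable one_ne_zero),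
    dY_smul' c ((contDiff_dY1 hf).differentiable one_ne_zero)]
  ring

/-- Laplacian only depends on the germ. -/
lemma lap_congr {f g : ℂ → ℝ} {z : ℂ} (h : f =ᶠ[nhds z] g) : lapC f z = lapC g z := by
  have h1 : dX f =ᶠ[nhds z] dX g := by
    filter_upwards [h.eventually_nhds] with y hy
    simp only [dX]; rw [Filter.EventuallyEq.fderiv_eq (show f =ᶠ[nhds y] g from hy)]
  have h2 : dY f =ᶠ[nhds z] dY g := by
    filter_upwards [h.eventually_nhds] with y hy
    simp only [dY]; rw [Filter.EventuallyEq.fderiv_eq (show f =ᶠ[nhds y] g from hy)]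
  simp only [lapC]
  rw [show dX (dX f) z = dX (dX g) z by rw [dX, dX, h1.fderiv_eq],
    show dY (dY f) z = dY (dY g) z by rw [dY, dY, h2.fderiv_eq]]

lemma normSq_cd : ContDiff ℝ 2 (fun z : ℂ => ‖z‖ ^ 2) := contDiff_norm_sq ℝ

lemma lap_normSq (z : ℂ) : lapC (fun z : ℂ => ‖z‖ ^ 2) z = 4 := by
  have e : ∀ z v : ℂ, fderiv ℝ (fun z : ℂ => ‖z‖ ^ 2) z v = 2 * (z.re * v.re + z.im * v.im) := by
    intro z v
    have : (fun z : ℂ => ‖z‖ ^ 2) = fun z => z.re * z.re + z.im * z.im := by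
      ext z; rw [Complex.sq_norm, Complex.normSq_apply]
    rw [this]
    have h1 : HasFDerivAt (fun z : ℂ => z.re) Complex.reCLM z := Complex.reCLM.hasFDerivAt
    have h2 : HasFDerivAt (fun z : ℂ => z.im) Complex.imCLM z := Complex.imCLM.hasFDerivAt
    rw [((h1.fun_mul h1).fun_add (h2.fun_mul h2)).fderiv]
    simp; ring
  have e1 : dX (fun z : ℂ => ‖z‖ ^ 2) = fun z => 2 * z.re := by
    ext z; rw [dX, e]; simp
  have e2 : dY (fun z : ℂ => ‖z‖ ^ 2) = fun z => 2 * z.im := by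
    ext z; rw [dY, e]; simp
  have h1 : HasFDerivAt (fun z : ℂ => 2 * z.re) ((2:ℝ) • Complex.reCLM) z := Complex.reCLM.hasFDerivAt.const_mul _
  have h2 : HasFDerivAt (fun z : ℂ => 2 * z.im) ((2:ℝ) • Complex.imCLM) z := Complex.imCLM.hasFDerivAt.const_mul _
  rw [lapC, e1, e2, dX, dY, h1.fderiv, h2.fderiv]
  simp; norm_num

/-- second derivative test along a line -/
lemma second_min (φ : ℝ → ℝ) (hφ : ContDiff ℝ 2 φ) (h : IsLocalMin φ 0) : 0 ≤ deriv (deriv φ) 0 := by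
  by_contra hneg
  push Not at hneg
  have hd : ContDiff ℝ 1 (deriv φ) := ((contDiff_succ_iff_deriv (n := 1)).1 (by simpa [one_add_one_eq_two] using hφ)).2.2
  have hdd : Continuous (deriv (deriv φ)) := hd.continuous_deriv le_rfl
  have h0 : deriv φ 0 = 0 := h.deriv_eq_zero
  obtain ⟨δ, hδ, hb⟩ := Metric.eventually_nhds_iff.1 ((hdd.tendsto 0).eventually_lt_const hneg)
  obtain ⟨δ', hδ', hm⟩ := Metric.eventually_nhds_iff.1 h
  have anti : StrictAntiOn (deriv φ) (Set.Icc 0 (min δ δ' / 2)) := by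
    apply strictAntiOn_of_deriv_neg (convex_Icc _ _) hd.continuous.continuousOn
    intro x hx
    rw [interior_Icc] at hx
    apply hb
    rw [Real.dist_eq, sub_zero, abs_of_pos hx.1]
    have := min_le_left δ δ'
    have := hx.2
    have := lt_min hδ hδ'
    linarith
  have hpos := lt_min hδ hδ'
  have anti2 : StrictAntiOn φ (Set.Icc 0 (min δ δ' / 2)) := by
    apply strictAntiOn_of_deriv_neg (convex_Icc _ _) hφ.continuous.continuousOn
    intro x hx
    rw [interior_Icc] at hx
    have := anti ⟨le_rfl, by linarith⟩ ⟨hx.1.le, hx.2.le⟩ hx.1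
    rwa [h0] at this
  have h1 := anti2 ⟨le_rfl, by linarith⟩ ⟨by linarith, le_rfl⟩ (by linarith : (0:ℝ) < min δ δ' / 2)
  have h2 : φ 0 ≤ φ (min δ δ' / 2) := by
    apply hm
    rw [Real.dist_eq, sub_zero, abs_of_pos (by linarith)]
    have := min_le_right δ δ'
    linarith
  linarith

lemma second_dir (f : ℂ → ℝ) (hf : ContDiff ℝ 2 f) (z v : ℂ) (h : IsLocalMin f z) :
    0 ≤ fderiv ℝ (fun w => fderiv ℝ f w v) z v := by
  have hl : ∀ t : ℝ, HasDerivAt (fun t : ℝ => z + (t : ℂ) * v) v t := by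
    intro t
    have := ((Complex.ofRealCLM.hasDerivAt (x := t)).mul_const v).const_add z
    simpa using this
  have hcd : ContDiff ℝ 2 (fun t : ℝ => z + (t : ℂ) * v) := by
    have : ContDiff ℝ 2 (fun t : ℝ => (t : ℂ)) := Complex.ofRealCLM.contDiff
    fun_prop
  have h1 : deriv (fun t : ℝ => f (z + (t : ℂ) * v)) = fun t : ℝ => fderiv ℝ f (z + (t : ℂ) * v) v := by
    ext t
    exact (((hf.differentiable two_ne_zero) _).hasFDerivAt.comp_hasDerivAt t (hl t)).deriv
  have hfd : ContDiff ℝ 1 (fun w => fderiv ℝ f w v) :=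
    (hf.fderiv_right (m := 1) (by norm_num)).clm_apply contDiff_const
  have h2 : deriv (fun t : ℝ => fderiv ℝ f (z + (t : ℂ) * v) v) 0 =
      fderiv ℝ (fun w => fderiv ℝ f w v) (z + ((0:ℝ) : ℂ) * v) v :=
    (((hfd.differentiable one_ne_zero) _).hasFDerivAt.comp_hasDerivAt (0:ℝ) (hl 0)).deriv
  have h3 := second_min (fun t : ℝ => f (z + (t : ℂ) * v)) (hf.comp hcd) (by
    have ht : Tendsto (fun t : ℝ => z + (t : ℂ) * v) (nhds 0) (nhds z) := by
      have := (hl 0).continuousAt.tendsto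
      simpa using this
    have := ht.eventually h
    simpa [IsLocalMin, IsMinFilter] using this)
  rw [h1, h2] at h3
  simpa using h3

lemma lap_min (f : ℂ → ℝ) (hf : ContDiff ℝ 2 f) (z : ℂ) (h : IsLocalMin f z) : 0 ≤ lapC f z :=
  add_nonneg (second_dir f hf z 1 h) (second_dir f hf z Complex.I h)

/-- minimum principle -/
lemma min_pr (f : ℂ → ℝ) (hf : ContDiff ℝ 2 f) (r : ℝ) (m : ℝ)
    (hl : ∀ z ∈ ball (0:ℂ) r, lapC f z < 0) (hb : ∀ z, ‖z‖ = r → m ≤ f z) :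
    ∀ z ∈ closedBall (0:ℂ) r, m ≤ f z := by
  intro z hz
  obtain ⟨z0, hz0, hmin⟩ := (isCompact_closedBall (0:ℂ) r).exists_isMinOn ⟨z, hz⟩ hf.continuous.continuousOn
  refine le_trans ?_ (hmin hz)
  rcases (mem_closedBall_zero_iff.1 hz0).eq_or_lt with h | h
  · exact hb _ h
  · exfalso
    have hz1 : z0 ∈ ball (0:ℂ) r := mem_ball_zero_iff.2 h
    have : IsLocalMin f z0 := by
      filter_upwards [isOpen_ball.mem_nhds hz1] with y hy
      exact hmin (ball_subset_closedBall hy)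
    exact absurd (lap_min f hf z0 this) (not_le.2 (hl z0 hz1))


lemma exists_cz {z : ℂ} {r : ℝ} (h : ‖z‖ = r) : ∃ θ, z = cz r θ := by
  refine ⟨z.arg, ?_⟩
  rw [cz, ce_exp, ← h, Complex.norm_mul_exp_arg_mul_I]

lemma disc_eps (U : ℂ → ℝ) (hU : ContDiff ℝ 2 U) (a b : ℝ) (ha : 0 < a) (hb : 0 < b) (r : ℝ)
    (hr : 0 < r)
    (hl : ∀ z ∈ closedBall (0:ℂ) r, a * Real.exp (U z) ≤ -(lapC U z))
    (hu : ∀ z ∈ closedBall (0:ℂ) r, -(lapC U z) ≤ b * Real.exp (U z))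
    (c : ℝ) (hc : ∀ z ∈ closedBall (0:ℂ) r, c < -(lapC U z)) (ε : ℝ) (hε : 0 < ε) :
    ∃ w : ℂ → ℝ, Continuous w ∧
      Psi a b (∫ z in ball (0:ℂ) r ∩ {z | 0 < w z}, -(lapC U z)) ≤
        Real.exp ε * (r ^ 2 / 2 * cI (fun z => Real.exp (U z)) r) ∧
      ∀ z ∈ closedBall (0:ℂ) r, -ε + c * (r ^ 2 - ‖z‖ ^ 2) / 4 ≤ w z := by
  obtain ⟨P, hP, hPU⟩ := circle_approx U hU.continuous r hr ε hε
  set h : ℂ → ℝ := fun z => (P z).re with hh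
  have hcd : ContDiff ℝ 2 h := re_cd P hP
  have hlap : ∀ z, lapC h z = 0 := lap_re P hP
  have hexp : Differentiable ℂ (fun z => Complex.exp (P z / 2)) := by fun_prop
  obtain ⟨g, hg⟩ := hexp.isExactOn_univ
  have hgd : Differentiable ℂ g := fun z => (hg z trivial).differentiableAt
  have hg' : ∀ z, ‖deriv g z‖ ^ 2 = Real.exp (h z) := by
    intro z
    rw [(hg z trivial).deriv, Complex.norm_exp, ← Real.exp_nat_mul]
    congr 1
    have : (P z / 2).re = (P z).re / 2 := by
      rw [show (2:ℂ) = ((2:ℝ):ℂ) by norm_num, Complex.div_ofReal_re]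
    rw [this]; push_cast; simp only [hh]; ring
  have hneg : ContDiff ℝ 2 (fun z => -1 * h z) := contDiff_const.mul hcd
  set w : ℂ → ℝ := fun z => U z + -1 * h z with hw
  have hwcd : ContDiff ℝ 2 w := hU.add hneg
  have hwlap : ∀ z, lapC w z = lapC U z := by
    intro z
    rw [hw, lap_add hU hneg, lap_smul _ hcd, hlap]; ring
  have hcirc : ∀ z, ‖z‖ = r → w z < 0 ∧ -ε ≤ w z := by
    intro z hz
    obtain ⟨θ, rfl⟩ := exists_cz hz
    have := hPU θ
    simp only [hw, hh]
    constructor <;> linarith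
  refine ⟨w, hwcd.continuous, ?_, ?_⟩
  · have hK0 : IsClosed ({z | 0 ≤ w z} ∩ closedBall (0:ℂ) r) :=
      (isClosed_le continuous_const hwcd.continuous).inter isClosed_closedBall
    have hK1 : ({z | 0 ≤ w z} ∩ closedBall (0:ℂ) r) ⊆ ball 0 r := by
      rintro z ⟨h1, h2⟩
      rw [mem_ball_zero_iff]
      rcases (mem_closedBall_zero_iff.1 h2).eq_or_lt with h3 | h3
      · exact absurd (hcirc z h3).1 (not_lt.2 h1)
      · exact h3
    obtain ⟨s, ⟨hs0, hsr⟩, hs⟩ := exists_pos_lt_subset_ball hr hK0 hK1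
    set χ : ℂ → ℝ := fun z => eta ((r ^ 2 - ‖z‖ ^ 2) / (r ^ 2 - s ^ 2)) with hχ
    have hpos : 0 < r ^ 2 - s ^ 2 := by nlinarith
    have hχcd : ContDiff ℝ 2 χ := eta_cd.comp ((contDiff_const.sub normSq_cd).div_const _)
    have hχ1 : ∀ z : ℂ, ‖z‖ ≤ s → χ z = 1 := by
      intro z hz
      apply eta_one
      rw [le_div_iff₀ hpos]
      have := norm_nonneg z
      nlinarith
    have hχ0 : ∀ z : ℂ, r ≤ ‖z‖ → χ z = 0 := by
      intro z hz
      apply eta_zero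
      apply div_nonpos_of_nonpos_of_nonneg _ hpos.le
      nlinarith
    have hχn : ∀ z, 0 ≤ χ z := fun z => eta_nonneg _
    have hχl : ∀ z, χ z ≤ 1 := fun z => eta_le _
    set W : ℂ → ℝ := fun z => χ z * w z - (1 - χ z) with hW
    have hWcd : ContDiff ℝ 2 W := (hχcd.mul hwcd).sub (contDiff_const.sub hχcd)
    have hWs : ∀ z : ℂ, ‖z‖ ≤ s → W z = w z := by
      intro z hz
      simp only [hW, hχ1 z hz]; ring
    have hWneg : ∀ z : ℂ, s ≤ ‖z‖ → W z < 0 := by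
      intro z hz
      rcases le_or_gt r ‖z‖ with h1 | h1
      · simp only [hW, hχ0 z h1]; norm_num
      · have hwz : w z < 0 := by
          by_contra hcon
          have := hs ⟨not_lt.1 hcon, mem_closedBall_zero_iff.2 h1.le⟩
          rw [mem_ball_zero_iff] at this
          linarith
        simp only [hW]
        rcases (hχn z).eq_or_lt with h2 | h2
        · rw [← h2]; norm_num
        · have := mul_neg_of_pos_of_neg h2 hwz
          linarith [hχl z]
    have hWball : ∀ z : ℂ, 0 ≤ W z → ‖z‖ < s := by
      intro z hz
      by_contra hcon
      exact absurd (hWneg z (not_lt.1 hcon)) (not_lt.2 hz)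
    have hWlap : ∀ z : ℂ, 0 ≤ W z → lapC W z = lapC U z := by
      intro z hz
      rw [← hwlap]
      apply lap_congr
      filter_upwards [isOpen_ball.mem_nhds (mem_ball_zero_iff.2 (hWball z hz))] with y hy
      exact hWs y (mem_ball_zero_iff.1 hy).le
    have hWe : ∀ z : ℂ, 0 ≤ W z → Real.exp (W z) * ‖deriv g z‖ ^ 2 = Real.exp (U z) := by
      intro z hz
      rw [hg', ← Real.exp_add, hWs z (hWball z hz).le]
      congr 1
      simp only [hw]; ring
    have hWK : IsCompact {z | 0 ≤ W z} := by
      apply (isCompact_closedBall (0:ℂ) s).of_isClosed_subset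
        (isClosed_le continuous_const hWcd.continuous)
      intro z hz
      exact mem_closedBall_zero_iff.2 (hWball z hz).le
    have hcb : ∀ z : ℂ, 0 ≤ W z → z ∈ closedBall (0:ℂ) r := fun z hz =>
      mem_closedBall_zero_iff.2 ((hWball z hz).le.trans hsr.le)
    have main := lvl_main W hWcd hWK g hgd a b ha hb
      (fun z hz => by rw [hWe z hz, hWlap z hz]; exact hl z (hcb z hz))
      (fun z hz => by rw [hWe z hz, hWlap z hz]; exact hu z (hcb z hz))
    have hmeas : MeasurableSet {z | 0 < W z} :=
      (isOpen_lt continuous_const hWcd.continuous).measurableSet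
    have hset : {z | 0 < W z} = ball (0:ℂ) r ∩ {z | 0 < w z} := by
      ext z
      constructor
      · intro hz
        have hz' : 0 < W z := hz
        have h1 := hWball z hz'.le
        refine ⟨mem_ball_zero_iff.2 (h1.trans hsr), ?_⟩
        rw [hWs z h1.le] at hz'
        exact hz'
      · rintro ⟨h1, h2⟩
        have h2' : 0 < w z := h2
        have h3 := hs ⟨h2'.le, ball_subset_closedBall h1⟩
        change 0 < W z
        rw [hWs z (mem_ball_zero_iff.1 h3).le]; exact h2
    have e1 : ∫ z in {z | 0 < W z}, -(lapC W z) = ∫ z in {z | 0 < W z}, -(lapC U z) := by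
      apply setIntegral_congr_fun hmeas
      intro z hz
      have hz' : 0 < W z := hz
      change -(lapC W z) = -(lapC U z)
      rw [hWlap z hz'.le]
    rw [e1] at main
    simp only [hg'] at main
    rw [hset] at main
    refine main.trans ?_
    have hec : ContDiff ℝ 2 (fun z => Real.exp (h z)) := hcd.exp
    have s1 : ∫ z in ball (0:ℂ) r ∩ {z | 0 < w z}, Real.exp (h z) ≤
        ∫ z in ball (0:ℂ) r, Real.exp (h z) := by
      apply setIntegral_mono_set
      · exact (hec.continuous.continuousOn.integrableOn_compact
          (isCompact_closedBall (0:ℂ) r)).mono_set ball_subset_closedBall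
      · exact Eventually.of_forall fun z => (Real.exp_pos _).le
      · exact Set.inter_subset_left.eventuallyLE
    have s2 := sub_mean _ hec (lap_exp h hcd hlap) r hr.le
    have s3 : cI (fun z => Real.exp (h z)) r ≤ Real.exp ε * cI (fun z => Real.exp (U z)) r := by
      have hpi := Real.pi_pos
      have k1 := cz_cont2 r
      have k2 := hec.continuous
      have k3 := hU.continuous
      simp only [cI]
      rw [← intervalIntegral.integral_const_mul]
      apply intervalIntegral.integral_mono_on (by linarith)
        (Continuous.intervalIntegrable (by fun_prop) _ _)
        (Continuous.intervalIntegrable (by fun_prop) _ _)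
      intro θ _
      rw [← Real.exp_add]
      apply Real.exp_le_exp.2
      have := (hPU θ).2
      simp only [hh]
      linarith
    calc _ ≤ _ := s1
      _ ≤ _ := s2
      _ ≤ r ^ 2 / 2 * (Real.exp ε * cI (fun z => Real.exp (U z)) r) := by gcongr
      _ = _ := by ring
  · have hq : ContDiff ℝ 2 (fun z : ℂ => c / 4 * ‖z‖ ^ 2) := contDiff_const.mul normSq_cd
    have hm := min_pr (fun z => w z + c / 4 * ‖z‖ ^ 2) (hwcd.add hq) r (-ε + c / 4 * r ^ 2)
      (by
        intro z hz
        rw [lap_add hwcd hq, lap_smul _ normSq_cd, lap_normSq, hwlap]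
        have := hc z (ball_subset_closedBall hz)
        linarith)
      (by
        intro z hz
        have := (hcirc z hz).2
        change _ ≤ w z + c / 4 * ‖z‖ ^ 2
        rw [hz]; linarith)
    intro z hz
    have := hm z hz
    change _ ≤ w z + c / 4 * ‖z‖ ^ 2 at this
    linarith

lemma disc_ineq (U : ℂ → ℝ) (hU : ContDiff ℝ 2 U) (a b : ℝ) (ha : 0 < a) (hb : 0 < b) (r : ℝ)
    (hr : 0 < r)
    (hl : ∀ z ∈ closedBall (0:ℂ) r, a * Real.exp (U z) ≤ -(lapC U z))
    (hu : ∀ z ∈ closedBall (0:ℂ) r, -(lapC U z) ≤ b * Real.exp (U z)) :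
    Psi a b (flux U r) ≤ r ^ 2 / 2 * cI (fun z => Real.exp (U z)) r := by
  have hlc : Continuous (fun z => -(lapC U z)) := (cont_lap hU).neg
  obtain ⟨z0, hz0, hmin⟩ := (isCompact_closedBall (0:ℂ) r).exists_isMinOn
    ⟨0, mem_closedBall_self hr.le⟩ hlc.continuousOn
  have hc0 : 0 < -(lapC U z0) := lt_of_lt_of_le (by positivity) (hl z0 hz0)
  set c := -(lapC U z0) / 2 with hcdef
  have hcpos : 0 < c := by positivity
  have hc : ∀ z ∈ closedBall (0:ℂ) r, c < -(lapC U z) := by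
    intro z hz
    have : -(lapC U z0) ≤ -(lapC U z) := hmin hz
    linarith
  choose! w hwc hw1 hw2 using fun n : ℕ => disc_eps U hU a b ha hb r hr hl hu c hc (1 / ((n:ℝ) + 1))
    (by positivity)
  have he : Tendsto (fun n : ℕ => 1 / ((n:ℝ) + 1)) atTop (nhds 0) :=
    tendsto_one_div_add_atTop_nhds_zero_nat
  have hlim1 : Tendsto (fun n => ∫ z in ball (0:ℂ) r ∩ {z | 0 < w n z}, -(lapC U z)) atTop
      (nhds (flux U r)) := by
    rw [flux_eq U hU r hr.le]
    have e : ∀ n, ∫ z in ball (0:ℂ) r ∩ {z | 0 < w n z}, -(lapC U z) =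
        ∫ z in ball (0:ℂ) r, ({z | 0 < w n z}).indicator (fun z => -(lapC U z)) z := fun n =>
      (setIntegral_indicator (isOpen_lt continuous_const (hwc n)).measurableSet).symm
    simp only [e]
    apply tendsto_integral_of_dominated_convergence (fun z => ‖-(lapC U z)‖)
    · intro n
      exact (hlc.measurable.indicator
        (isOpen_lt continuous_const (hwc n)).measurableSet).aestronglyMeasurable
    · exact (hlc.norm.continuousOn.integrableOn_compact
        (isCompact_closedBall (0:ℂ) r)).mono_set ball_subset_closedBall
    · intro n
      exact Eventually.of_forall fun z => norm_indicator_le_norm_self _ _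
    · refine (ae_restrict_iff' measurableSet_ball).2 (Eventually.of_forall fun z hz => ?_)
      apply tendsto_const_nhds.congr'
      have hz' := mem_ball_zero_iff.1 hz
      have hp : 0 < c * (r ^ 2 - ‖z‖ ^ 2) / 4 := by
        have : 0 < r ^ 2 - ‖z‖ ^ 2 := by nlinarith [norm_nonneg z]
        positivity
      filter_upwards [he.eventually_lt_const hp] with n hn
      rw [Set.indicator_of_mem]
      change 0 < w n z
      have := hw2 n z (ball_subset_closedBall hz)
      linarith
  have hR : Tendsto (fun n : ℕ => Real.exp (1 / ((n:ℝ) + 1)) *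
      (r ^ 2 / 2 * cI (fun z => Real.exp (U z)) r)) atTop
      (nhds (Real.exp 0 * (r ^ 2 / 2 * cI (fun z => Real.exp (U z)) r))) :=
    ((Real.continuous_exp.tendsto 0).comp he).mul_const _
  rw [Real.exp_zero, one_mul] at hR
  exact le_of_tendsto_of_tendsto' (((Psi_cont a b).tendsto _).comp hlim1) hR hw1


lemma mono_aux (f f' : ℝ → ℝ) (s t : ℝ) (hst : s ≤ t) (hc : ContinuousOn f (Set.Icc s t))
    (hd : ∀ x ∈ Set.Ioo s t, HasDerivAt f (f' x) x) (h0 : ∀ x ∈ Set.Ioo s t, 0 ≤ f' x) :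
    f s ≤ f t := by
  have : MonotoneOn f (Set.Icc s t) := by
    apply monotoneOn_of_deriv_nonneg (convex_Icc _ _) hc
    · rw [interior_Icc]
      exact fun x hx => (hd x hx).differentiableAt.differentiableWithinAt
    · rw [interior_Icc]
      intro x hx
      rw [(hd x hx).deriv]; exact h0 x hx
  exact this ⟨le_rfl, hst⟩ ⟨hst, le_rfl⟩ hst

lemma Psi_low (a b f : ℝ) (hb : 0 < b) (ha : 0 < a) (h0 : 0 ≤ f) (h1 : f ≤ 4 * Real.pi) :
    a / b * f ≤ 2 * a * Psi a b f := by
  have hpi := Real.pi_pos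
  have e : 2 * a * Psi a b f = a / b * (f * (8 * Real.pi - f) / (4 * Real.pi)) := by
    rw [Psi, max_eq_left (by linarith : 0 ≤ 4 * Real.pi - f),
      max_eq_right (by linarith : f - 4 * Real.pi ≤ 0)]
    field_simp; ring
  rw [e]
  apply mul_le_mul_of_nonneg_left _ (by positivity)
  rw [le_div_iff₀ (by positivity)]
  nlinarith

lemma Psi_high (a b q f : ℝ) (hb : 0 < b) (ha : 0 < a) (hq : 0 < q) (hqq : q ^ 2 = a / b)
    (h0 : 4 * Real.pi ≤ f) (h1 : f ≤ 4 * Real.pi * (1 + q)) :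
    q * (4 * Real.pi * (1 + q) - f) ≤ 2 * a * Psi a b f := by
  have hpi := Real.pi_pos
  have e : 2 * a * Psi a b f = 4 * Real.pi * q ^ 2 - (f - 4 * Real.pi) ^ 2 / (4 * Real.pi) := by
    rw [Psi, max_eq_right (by linarith : 4 * Real.pi - f ≤ 0),
      max_eq_left (by linarith : 0 ≤ f - 4 * Real.pi), hqq]
    field_simp; ring
  rw [e, le_sub_iff_add_le, ← le_sub_iff_add_le', div_le_iff₀ (by positivity)]
  nlinarith [mul_nonneg (sub_nonneg.2 h0) (sub_nonneg.2 h1)]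

lemma ode_core (a b q R : ℝ) (ha : 0 < a) (hb : 0 < b) (hq : 0 < q) (hqq : q ^ 2 = a / b)
    (hR : 0 < R) (A M m : ℝ → ℝ) (hA : Continuous A) (hM : Continuous M) (hM0 : M 0 = 0)
    (dA : ∀ r, 0 < r → HasDerivAt A (-(M r / (2 * Real.pi * r))) r)
    (dM : ∀ r, 0 < r → HasDerivAt M (m r) r)
    (h1 : ∀ r, 0 < r → r ≤ R → 2 * a * Psi a b (M r) ≤ r * m r)
    (h2 : ∀ r, 0 < r → r ≤ R → 2 * Real.pi * a * r * Real.exp (A r) ≤ m r) :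
    q * A 0 + A R ≤ (1 + q) * Real.log (4 / a) + 2 * q * b / a + 2 - 2 * (1 + q) * Real.log R := by
  have hpi := Real.pi_pos
  have mnn : ∀ r, 0 < r → r ≤ R → 0 ≤ m r := fun r hr hrR =>
    le_trans (by positivity) (h2 r hr hrR)
  have Mmono : ∀ s t, 0 ≤ s → s ≤ t → t ≤ R → M s ≤ M t := fun s t hs hst htR =>
    mono_aux M m s t hst hM.continuousOn (fun x hx => dM x (hs.trans_lt hx.1))
      (fun x hx => mnn x (hs.trans_lt hx.1) (hx.2.le.trans htR))
  have Mnn : ∀ r, 0 ≤ r → r ≤ R → 0 ≤ M r := fun r hr hrR => by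
    have := Mmono 0 r le_rfl hr hrR
    rwa [hM0] at this
  have Aanti : ∀ s t, 0 ≤ s → s ≤ t → t ≤ R → A t ≤ A s := by
    intro s t hs hst htR
    have := mono_aux (fun x => -A x) (fun x => -(-(M x / (2 * Real.pi * x)))) s t hst
      hA.neg.continuousOn (fun x hx => (dA x (hs.trans_lt hx.1)).fun_neg)
      (fun x hx => by
        have hx0 := hs.trans_lt hx.1
        have := Mnn x hx0.le (hx.2.le.trans htR)
        rw [neg_neg]; positivity)
    linarith
  -- the radius r0
  obtain ⟨r0, hr0, hr0R, hMr0, hcase⟩ : ∃ r0, 0 < r0 ∧ r0 ≤ R ∧ M r0 ≤ 4 * Real.pi ∧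
      (r0 = R ∨ M r0 = 4 * Real.pi) := by
    rcases le_total (M R) (4 * Real.pi) with h | h
    · exact ⟨R, hR, le_rfl, h, Or.inl rfl⟩
    · obtain ⟨x, hx, hxM⟩ := intermediate_value_Icc hR.le hM.continuousOn
        (show 4 * Real.pi ∈ Set.Icc (M 0) (M R) from ⟨by rw [hM0]; positivity, h⟩)
      refine ⟨x, ?_, hx.2, hxM.le, Or.inr hxM⟩
      rcases hx.1.eq_or_lt with h0 | h0
      · rw [← h0, hM0] at hxM; linarith
      · exact h0
  -- first part
  have p1 : A 0 ≤ A r0 + 2 * b / a := by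
    have := mono_aux (fun x => A x + b / (2 * Real.pi * a) * M x)
      (fun x => -(M x / (2 * Real.pi * x)) + b / (2 * Real.pi * a) * m x) 0 r0 hr0.le
      (Continuous.continuousOn (by fun_prop))
      (fun x hx => (dA x hx.1).fun_add ((dM x hx.1).const_mul _))
      (fun x hx => by
        have hx0 : 0 < x := hx.1
        have hxR : x ≤ R := hx.2.le.trans hr0R
        have k1 := h1 x hx0 hxR
        have k2 := Psi_low a b (M x) hb ha (Mnn x hx0.le hxR) ((Mmono x r0 hx0.le hx.2.le hr0R).trans hMr0)
        have k3 : M x ≤ b / a * (x * m x) := by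
          have := mul_le_mul_of_nonneg_left (k2.trans k1) (by positivity : 0 ≤ b / a)
          have e : b / a * (a / b * M x) = M x := by field_simp
          rwa [e] at this
        have e : -(M x / (2 * Real.pi * x)) + b / (2 * Real.pi * a) * m x =
            (b / a * (x * m x) - M x) / (2 * Real.pi * x) := by field_simp; ring
        rw [e]
        apply div_nonneg (by linarith) (by positivity))
    simp only [hM0, mul_zero, add_zero] at this
    have k : b / (2 * Real.pi * a) * M r0 ≤ b / (2 * Real.pi * a) * (4 * Real.pi) := by gcongr
    have e : b / (2 * Real.pi * a) * (4 * Real.pi) = 2 * b / a := by field_simp; norm_num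
    linarith
  have p2 : A r0 + 2 * Real.log r0 ≤ Real.log (4 / a) := by
    have := mono_aux (fun x => M x - Real.pi * a * Real.exp (A r0) * x ^ 2)
      (fun x => m x - Real.pi * a * Real.exp (A r0) * (2 * x)) 0 r0 hr0.le
      (Continuous.continuousOn (by fun_prop))
      (fun x hx => by
        have := (hasDerivAt_pow 2 x).const_mul (Real.pi * a * Real.exp (A r0))
        refine ((dM x hx.1).fun_sub this).congr_deriv ?_
        simp)
      (fun x hx => by
        have hx0 : 0 < x := hx.1
        have k := h2 x hx0 (hx.2.le.trans hr0R)
        have k2 : Real.exp (A r0) ≤ Real.exp (A x) := Real.exp_le_exp.2 (Aanti x r0 hx0.le hx.2.le hr0R)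
        have k3 : 2 * Real.pi * a * x * Real.exp (A r0) ≤ 2 * Real.pi * a * x * Real.exp (A x) := by
          gcongr
        linarith)
    simp only [hM0] at this
    have k : Real.exp (A r0) * r0 ^ 2 ≤ 4 / a := by
      rw [le_div_iff₀ ha]
      have : Real.pi * (Real.exp (A r0) * r0 ^ 2 * a) ≤ Real.pi * 4 := by nlinarith
      exact le_of_mul_le_mul_left this hpi
    have := Real.log_le_log (by positivity) k
    rw [Real.log_mul (Real.exp_pos _).ne' (by positivity), Real.log_exp, Real.log_pow] at this
    push_cast at this
    exact this
  have p3 : A R + 2 * (1 + q) * Real.log R ≤ A r0 + 2 * (1 + q) * Real.log r0 + 2 := by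
    rcases hcase with h | h
    · rw [h]; linarith
    · have dG : ∀ x, 0 < x → HasDerivAt (fun x => A x + 2 * (1 + q) * Real.log x)
          ((4 * Real.pi * (1 + q) - M x) / (2 * Real.pi * x)) x := by
        intro x hx
        refine ((dA x hx).fun_add ((Real.hasDerivAt_log hx.ne').const_mul _)).congr_deriv ?_
        field_simp; ring
      have cG : ∀ s t, 0 < s → ContinuousOn (fun x => A x + 2 * (1 + q) * Real.log x) (Set.Icc s t) :=
        fun s t hs x hx => (dG x (hs.trans_le hx.1)).continuousAt.continuousWithinAt
      obtain ⟨r1, hr1, hr1R, hMr1, hcase1⟩ : ∃ r1, r0 ≤ r1 ∧ r1 ≤ R ∧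
          M r1 ≤ 4 * Real.pi * (1 + q) ∧ (r1 = R ∨ M r1 = 4 * Real.pi * (1 + q)) := by
        rcases le_total (M R) (4 * Real.pi * (1 + q)) with h' | h'
        · exact ⟨R, hr0R, le_rfl, h', Or.inl rfl⟩
        · obtain ⟨x, hx, hxM⟩ := intermediate_value_Icc hr0R hM.continuousOn
            (show 4 * Real.pi * (1 + q) ∈ Set.Icc (M r0) (M R) from ⟨by rw [h]; nlinarith, h'⟩)
          exact ⟨x, hx.1, hx.2, hxM.le, Or.inr hxM⟩
      have g1 := mono_aux (fun x => M x / (2 * Real.pi * q) - (A x + 2 * (1 + q) * Real.log x))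
        (fun x => m x / (2 * Real.pi * q) - (4 * Real.pi * (1 + q) - M x) / (2 * Real.pi * x))
        r0 r1 hr1 ((hM.div_const _).continuousOn.sub (cG r0 r1 hr0))
        (fun x hx => ((dM x (hr0.trans hx.1)).div_const _).fun_sub (dG x (hr0.trans hx.1)))
        (fun x hx => by
          have hx0 : 0 < x := hr0.trans hx.1
          have hxR : x ≤ R := hx.2.le.trans hr1R
          have k1 := h1 x hx0 hxR
          have k2 := Psi_high a b q (M x) hb ha hq hqq
            (by rw [← h]; exact Mmono r0 x hr0.le hx.1.le hxR)
            ((Mmono x r1 hx0.le hx.2.le hr1R).trans hMr1)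
          have e : m x / (2 * Real.pi * q) - (4 * Real.pi * (1 + q) - M x) / (2 * Real.pi * x) =
            (x * m x - q * (4 * Real.pi * (1 + q) - M x)) / (2 * Real.pi * q * x) := by
              field_simp
          rw [e]
          exact div_nonneg (by linarith) (by positivity))
      have g2 : A R + 2 * (1 + q) * Real.log R ≤ A r1 + 2 * (1 + q) * Real.log r1 := by
        rcases hcase1 with h' | h'
        · rw [h']
        · have := mono_aux (fun x => -(A x + 2 * (1 + q) * Real.log x))
            (fun x => -((4 * Real.pi * (1 + q) - M x) / (2 * Real.pi * x))) r1 R hr1R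
            (cG r1 R (hr0.trans_le hr1)).neg
            (fun x hx => (dG x ((hr0.trans_le hr1).trans hx.1)).fun_neg)
            (fun x hx => by
              have hx1 : 0 < r1 := hr0.trans_le hr1
              have hx0 : 0 < x := hx1.trans hx.1
              have := Mmono r1 x hx1.le hx.1.le hx.2.le
              rw [← neg_div]
              exact div_nonneg (by linarith) (by positivity))
          linarith
      have k : M r1 / (2 * Real.pi * q) - M r0 / (2 * Real.pi * q) ≤ 2 := by
        rw [← sub_div, div_le_iff₀ (by positivity), h]
        linarith
      linarith
  have k1 := mul_le_mul_of_nonneg_left p1 hq.le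
  have k2 := mul_le_mul_of_nonneg_left p2 (by linarith : 0 ≤ 1 + q)
  have e : q * (A r0 + 2 * b / a) = q * A r0 + 2 * q * b / a := by ring
  linarith

lemma core (U : ℂ → ℝ) (hU : ContDiff ℝ 2 U) (a b q R : ℝ) (ha : 0 < a) (hb : 0 < b) (hq : 0 < q)
    (hqq : q ^ 2 = a / b) (hR : 0 < R)
    (hl : ∀ z ∈ closedBall (0:ℂ) R, a * Real.exp (U z) ≤ -(lapC U z))
    (hu : ∀ z ∈ closedBall (0:ℂ) R, -(lapC U z) ≤ b * Real.exp (U z)) :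
    q * U 0 + cI U R / (2 * Real.pi) ≤
      (1 + q) * Real.log (4 / a) + 2 * q * b / a + 2 - 2 * (1 + q) * Real.log R := by
  have hpi := Real.pi_pos
  have hU1 : ContDiff ℝ 1 U := hU.of_le (by norm_num)
  have hUc := hU.continuous
  have hlc := cont_lap hU
  have hM : ∀ r, 0 < r → r ≤ R → a * cI (fun z => Real.exp (U z)) r ≤ cI (fun z => -(lapC U z)) r := by
    intro r hr hrR
    have k1 := cz_cont2 r
    simp only [cI]
    rw [← intervalIntegral.integral_const_mul]
    apply intervalIntegral.integral_mono_on (by linarith)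
      (Continuous.intervalIntegrable (by fun_prop) _ _)
      (Continuous.intervalIntegrable (by fun_prop) _ _)
    intro θ _
    apply hl
    rw [mem_closedBall_zero_iff, norm_cz, abs_of_pos hr]; exact hrR
  have jen : ∀ r, 2 * Real.pi * Real.exp (cI U r / (2 * Real.pi)) ≤ cI (fun z => Real.exp (U z)) r := by
    intro r
    have k1 := cz_cont2 r
    set t := cI U r / (2 * Real.pi) with ht
    have : ∫ θ in (-Real.pi)..Real.pi, Real.exp t * ((1 - t) + U (cz r θ)) ≤
        cI (fun z => Real.exp (U z)) r := by
      apply intervalIntegral.integral_mono_on (by linarith)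
        (Continuous.intervalIntegrable (by fun_prop) _ _)
        (Continuous.intervalIntegrable (by fun_prop) _ _)
      intro θ _
      have h := Real.add_one_le_exp (U (cz r θ) - t)
      have h' := mul_le_mul_of_nonneg_left h (Real.exp_pos t).le
      rw [← Real.exp_add] at h'
      calc _ = Real.exp t * (U (cz r θ) - t + 1) := by ring
        _ ≤ _ := h'
        _ = _ := by congr 1; ring
    rw [intervalIntegral.integral_const_mul, intervalIntegral.integral_add
      (Continuous.intervalIntegrable (by fun_prop) _ _)
      (Continuous.intervalIntegrable (by fun_prop) _ _), intervalIntegral.integral_const] at this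
    refine le_trans (le_of_eq ?_) this
    have e : ∫ θ in (-Real.pi)..Real.pi, U (cz r θ) = 2 * Real.pi * t := by
      rw [ht]
      change cI U r = _
      field_simp
    rw [e, smul_eq_mul]; ring
  have := ode_core a b q R ha hb hq hqq hR (fun r => cI U r / (2 * Real.pi)) (flux U)
    (fun r => r * cI (fun z => -(lapC U z)) r) ((cI_cont hUc).div_const _) (flux_cont U hU)
    (flux_zero U)
    (fun r hr => by
      refine ((cI_has' U hU1 r hr.ne').div_const (2 * Real.pi)).congr_deriv ?_
      field_simp)
    (fun r hr => flux_has U hU r)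
    (fun r hr hrR => by
      have hsub : closedBall (0:ℂ) r ⊆ closedBall 0 R := closedBall_subset_closedBall hrR
      have d := disc_ineq U hU a b ha hb r hr (fun z hz => hl z (hsub hz)) (fun z hz => hu z (hsub hz))
      have k := hM r hr hrR
      calc 2 * a * Psi a b (flux U r) ≤ 2 * a * (r ^ 2 / 2 * cI (fun z => Real.exp (U z)) r) := by gcongr
        _ = r ^ 2 * (a * cI (fun z => Real.exp (U z)) r) := by ring
        _ ≤ r ^ 2 * cI (fun z => -(lapC U z)) r := by gcongr
        _ = _ := by ring)
    (fun r hr hrR => by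
      have k := hM r hr hrR
      calc 2 * Real.pi * a * r * Real.exp (cI U r / (2 * Real.pi))
          = r * (a * (2 * Real.pi * Real.exp (cI U r / (2 * Real.pi)))) := by ring
        _ ≤ r * (a * cI (fun z => Real.exp (U z)) r) := by gcongr; exact jen r
        _ ≤ _ := by gcongr)
  have e0 : cI U 0 / (2 * Real.pi) = U 0 := by
    have : ∀ θ, cz 0 θ = 0 := by intro θ; simp [cz]
    simp only [cI, this, intervalIntegral.integral_const, smul_eq_mul]
    field_simp; ring
  simp only [e0] at this
  exact this

noncomputable def LL : ℂ ≃ₗᵢ[ℝ] E2 := Complex.orthonormalBasisOneI.repr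

lemma LL_one : LL 1 = EuclideanSpace.single 0 1 := by
  have := Complex.orthonormalBasisOneI.repr_self 0
  simpa [LL] using this

lemma LL_I : LL Complex.I = EuclideanSpace.single 1 1 := by
  have := Complex.orthonormalBasisOneI.repr_self 1
  simpa [LL] using this

lemma fderiv_LL (f : E2 → ℝ) (x : E2) (z v : ℂ) :
    fderiv ℝ (fun y => f (x + LL y)) z v = fderiv ℝ f (x + LL z) (LL v) := by
  have h := LL.toContinuousLinearEquiv.comp_right_fderiv (f := fun w => f (x + w)) (x := z)
  have h2 : fderiv ℝ (fun y => f (x + LL y)) z =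
    (fderiv ℝ (fun w => f (x + w)) (LL z)).comp (LL.toContinuousLinearEquiv : ℂ →L[ℝ] E2) := h
  rw [h2, fderiv_comp_add_left]
  rfl

lemma lap_LL (u : E2 → ℝ) (x : E2) (z : ℂ) :
    lapC (fun y => u (x + LL y)) z = lapl u (x + LL z) := by
  have e1 : dX (fun y => u (x + LL y)) = fun y => pd 0 u (x + LL y) := by
    ext y; rw [dX, fderiv_LL, LL_one, pd]
  have e2 : dY (fun y => u (x + LL y)) = fun y => pd 1 u (x + LL y) := by
    ext y; rw [dY, fderiv_LL, LL_I, pd]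
  rw [lapC, e1, e2, dX, dY, fderiv_LL, fderiv_LL, LL_one, LL_I, lapl]
  rfl

theorem stmt4 (Ω : Set E2) (hΩ : IsOpen Ω) (a b : ℝ) (ha : 0 < a) (hab : a ≤ b)
    (K : Set E2) (hK : IsCompact K) (hKΩ : K ⊆ Ω) :
    ∃ c : ℝ, ∀ V u : E2 → ℝ,
      (∀ x ∈ Ω, a ≤ V x ∧ V x ≤ b) →
      ContDiffOn ℝ 2 u Ω →
      (∀ x ∈ Ω, -(lapl u x) = V x * Real.exp (u x)) →
      ∀ x ∈ K, ∀ ε : ℝ, 0 < ε → ∃ y ∈ Ω, Real.sqrt (a / b) * u x + u y < c + ε := by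
  have hb : 0 < b := ha.trans_le hab
  have hpi := Real.pi_pos
  obtain ⟨δ, hδ, hsub⟩ := hK.exists_cthickening_subset_open hΩ hKΩ
  set q := Real.sqrt (a / b) with hqdef
  have hq : 0 < q := Real.sqrt_pos.2 (by positivity)
  have hqq : q ^ 2 = a / b := Real.sq_sqrt (by positivity)
  refine ⟨(1 + q) * Real.log (4 / a) + 2 * q * b / a + 2 - 2 * (1 + q) * Real.log (δ / 3), ?_⟩
  intro V u hV hu heq x hx ε hε
  by_contra hcon
  push Not at hcon
  have hin : ∀ z : ℂ, ‖z‖ ≤ δ → x + LL z ∈ Ω := by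
    intro z hz
    apply hsub
    apply closedBall_subset_cthickening hx
    rw [mem_closedBall, dist_eq_norm, add_sub_cancel_left, LL.norm_map]
    exact hz
  set χ : ℂ → ℝ := fun z => eta (((3 * δ / 4) ^ 2 - ‖z‖ ^ 2) / ((3 * δ / 4) ^ 2 - (δ / 2) ^ 2)) with hχ
  have hpos : 0 < (3 * δ / 4) ^ 2 - (δ / 2) ^ 2 := by nlinarith
  have hχcd : ContDiff ℝ 2 χ := eta_cd.comp ((contDiff_const.sub normSq_cd).div_const _)
  have hχ1 : ∀ z : ℂ, ‖z‖ ≤ δ / 2 → χ z = 1 := by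
    intro z hz
    apply eta_one
    rw [le_div_iff₀ hpos]
    have := norm_nonneg z
    nlinarith
  have hχ0 : ∀ z : ℂ, 3 * δ / 4 ≤ ‖z‖ → χ z = 0 := by
    intro z hz
    apply eta_zero
    apply div_nonpos_of_nonpos_of_nonneg _ hpos.le
    nlinarith
  set U : ℂ → ℝ := fun z => χ z * u (x + LL z) with hUdef
  have hU1 : ∀ z : ℂ, ‖z‖ ≤ δ / 2 → U z = u (x + LL z) := by
    intro z hz; simp only [hUdef, hχ1 z hz, one_mul]
  have hU : ContDiff ℝ 2 U := by
    rw [contDiff_iff_contDiffAt]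
    intro z
    rcases lt_or_ge ‖z‖ δ with h | h
    · apply hχcd.contDiffAt.mul
      have h1 : ContDiffAt ℝ 2 u (x + LL z) := hu.contDiffAt (hΩ.mem_nhds (hin z h.le))
      have h2 : ContDiffAt ℝ 2 (fun z : ℂ => x + LL z) z :=
        (contDiff_const.add LL.contDiff).contDiffAt
      exact h1.comp z h2
    · have : U =ᶠ[nhds z] fun _ => 0 := by
        have ho : IsOpen {y : ℂ | 3 * δ / 4 < ‖y‖} := isOpen_lt continuous_const continuous_norm
        filter_upwards [ho.mem_nhds (show 3 * δ / 4 < ‖z‖ by linarith)] with y hy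
        have hy' : 3 * δ / 4 < ‖y‖ := hy
        simp only [hUdef, hχ0 y hy'.le, zero_mul]
      exact contDiffAt_const.congr_of_eventuallyEq this
  have hlap : ∀ z ∈ closedBall (0:ℂ) (δ / 3), -(lapC U z) = V (x + LL z) * Real.exp (U z) := by
    intro z hz
    have hz' := mem_closedBall_zero_iff.1 hz
    have : U =ᶠ[nhds z] fun y => u (x + LL y) := by
      filter_upwards [isOpen_ball.mem_nhds (mem_ball_zero_iff.2 (show ‖z‖ < δ / 2 by linarith))] with y hy
      exact hU1 y (mem_ball_zero_iff.1 hy).le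
    rw [lap_congr this, lap_LL, hU1 z (by linarith)]
    exact heq _ (hin z (by linarith))
  have main := core U hU a b q (δ / 3) ha hb hq hqq (by positivity)
    (fun z hz => by
      rw [hlap z hz]
      have hz' := mem_closedBall_zero_iff.1 hz
      exact mul_le_mul_of_nonneg_right (hV _ (hin z (by linarith))).1 (Real.exp_pos _).le)
    (fun z hz => by
      rw [hlap z hz]
      have hz' := mem_closedBall_zero_iff.1 hz
      exact mul_le_mul_of_nonneg_right (hV _ (hin z (by linarith))).2 (Real.exp_pos _).le)
  set c := (1 + q) * Real.log (4 / a) + 2 * q * b / a + 2 - 2 * (1 + q) * Real.log (δ / 3) with hc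
  have hU0 : U 0 = u x := by rw [hU1 0 (by simp; linarith)]; simp
  have hlow : 2 * Real.pi * (c + ε - q * u x) ≤ cI U (δ / 3) := by
    have k1 := cz_cont2 (δ / 3)
    have k2 := hU.continuous
    have : ∫ _ in (-Real.pi)..Real.pi, (c + ε - q * u x) ≤ cI U (δ / 3) := by
      apply intervalIntegral.integral_mono_on (by linarith)
        (Continuous.intervalIntegrable (by fun_prop) _ _)
        (Continuous.intervalIntegrable (by fun_prop) _ _)
      intro θ _
      have hn : ‖cz (δ / 3) θ‖ = δ / 3 := by rw [norm_cz, abs_of_pos (by positivity)]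
      rw [hU1 _ (by rw [hn]; linarith)]
      have := hcon _ (hin (cz (δ / 3) θ) (by rw [hn]; linarith))
      linarith
    rw [intervalIntegral.integral_const, smul_eq_mul] at this
    linarith
  have hlow2 : c + ε - q * u x ≤ cI U (δ / 3) / (2 * Real.pi) := by
    rw [le_div_iff₀ (by positivity)]; linarith
  rw [hU0] at main
  linarith
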